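/- arXiv:2207.03016 — 10 statements merged into one kernel-verified Lean document; each statement's English description precedes it below -/
import Mathlib

section
/- The domain D^c ⊆ ℝ^{ℓ−1} is a convex set. -/
open Finset

noncomputable section

/-- Membership in the domain `D` of the optimization problem. -/
def memD (ℓ : ℕ) (a b x y : ℕ → ℝ) : Prop :=
  (∀ i ∈ Finset.Icc 1 ℓ, 0 < x i ∧ 0 < y i) ∧
  (∑ i ∈ Finset.Icc 1 ℓ, (x i + y i)) ≤ 1 ∧
  (∀ m ∈ Finset.Icc 1 ℓ,
    0 ≤ ∑ i ∈ Finset.Icc 1 m, (x i - (a i) ^ 2 / (2 * x i) - (b i) ^ 2 / (2 * y i)))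

/-- Membership in the domain `D̂`: elements of `D` where the cumulative condition holds with
equality for `m = ℓ`. -/
def memDhat (ℓ : ℕ) (a b x y : ℕ → ℝ) : Prop :=
  memD ℓ a b x y ∧
  (∑ i ∈ Finset.Icc 1 ℓ, (x i - (a i) ^ 2 / (2 * x i) - (b i) ^ 2 / (2 * y i))) = 0

/-- The convention `c_0 = c_ℓ = 0`. -/
def cbar (ℓ : ℕ) (c : ℕ → ℝ) (m : ℕ) : ℝ := if m = 0 ∨ m = ℓ then 0 else c m

/-- Membership in `D^m(c, c')`. -/
def memDm (a b : ℕ → ℝ) (N : ℝ) (m : ℕ) (c c' x y : ℝ) : Prop :=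
  0 < x ∧ 0 < y ∧ x + y ≤ N ∧ c + x - (a m) ^ 2 / (2 * x) - (b m) ^ 2 / (2 * y) = c'

/-- Membership in `D̃(c_1, …, c_{ℓ-1})`. -/
def memDtilde (ℓ : ℕ) (a b : ℕ → ℝ) (N : ℝ) (c x y : ℕ → ℝ) : Prop :=
  (∑ i ∈ Finset.Icc 1 ℓ, (x i + y i)) ≤ 1 ∧
  ∀ m ∈ Finset.Icc 1 ℓ, memDm a b N m (cbar ℓ c (m - 1)) (cbar ℓ c m) (x m) (y m)

/-- Membership in `D^c`. -/
def memDc (ℓ : ℕ) (a b : ℕ → ℝ) (N : ℝ) (c : ℕ → ℝ) : Prop :=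
  (∀ m ∈ Finset.Icc 1 (ℓ - 1), 0 ≤ c m) ∧ ∃ x y, memDtilde ℓ a b N c x y

/-- `(x, y)` minimizes `x + y` over `D^m(c, c')`. -/
def isArgminDm (a b : ℕ → ℝ) (N : ℝ) (m : ℕ) (c c' x y : ℝ) : Prop :=
  memDm a b N m c c' x y ∧ ∀ x' y' : ℝ, memDm a b N m c c' x' y' → x + y ≤ x' + y'

/-- The projection `D^m_x(c, C)` of `D^m(c, C)` to the first coordinate. -/
def Dmx (a b : ℕ → ℝ) (N : ℝ) (m : ℕ) (c C : ℝ) : Set ℝ :=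
  {x : ℝ | ∃ y : ℝ, memDm a b N m c C x y}

/-- The function `f(c̃) = sqrt((1 + c̃)/2 + sqrt(c̃²/4 + c̃))`. -/
def fval (c : ℝ) : ℝ := Real.sqrt ((1 + c) / 2 + Real.sqrt (c ^ 2 / 4 + c))

/-- `c̃ = (Σ b_i)² / (2 (Σ a_i)²)`. -/
def ctilde (ℓ : ℕ) (a b : ℕ → ℝ) : ℝ :=
  (∑ i ∈ Finset.Icc 1 ℓ, b i) ^ 2 / (2 * (∑ i ∈ Finset.Icc 1 ℓ, a i) ^ 2)

/-- The objective function `F` on `ℝ^{2ℓ}`. -/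
def Fobj (ℓ : ℕ) (a b x y : ℕ → ℝ) : ℝ :=
  (1 - ∑ i ∈ Finset.Icc 1 ℓ, (x i + y i)) *
  (1 - ∑ i ∈ Finset.Icc 1 ℓ, (y i + (a i) ^ 2 / (2 * x i) + (b i) ^ 2 / (2 * y i)))

/-- The late-expensive-obstacles assumption. -/
def LateExpensive (ℓ : ℕ) (a b : ℕ → ℝ) : Prop :=
  ∀ m, 1 ≤ m → m < ℓ →
    (∑ i ∈ Finset.Icc 1 m, b i) / (∑ i ∈ Finset.Icc 1 m, a i) <
      (∑ i ∈ Finset.Icc (m + 1) ℓ, b i) / (∑ i ∈ Finset.Icc (m + 1) ℓ, a i)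

/-- The ratio `(Σ_{j=p}^q b_j) / (Σ_{j=p}^q a_j)`. -/
def ratioBA (a b : ℕ → ℝ) (p q : ℕ) : ℝ :=
  (∑ j ∈ Finset.Icc p q, b j) / (∑ j ∈ Finset.Icc p q, a j)

/-- `u` (on indices `0, …, n+1`) is an admissible division into blocks. -/
def AdmissibleDiv (ℓ : ℕ) (a b : ℕ → ℝ) (n : ℕ) (u : ℕ → ℕ) : Prop :=
  u 0 = 0 ∧ u (n + 1) = ℓ ∧ (∀ i ≤ n, u i < u (i + 1)) ∧
  ∀ i ≤ n, ∀ m, u i < m → m < u (i + 1) →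
    ratioBA a b (u i + 1) m < ratioBA a b (m + 1) (u (i + 1))

/-- The canonical admissible division into blocks: the admissible division whose index
set is the intersection of the index sets of all admissible divisions into blocks. -/
def IsCanonicalDiv (ℓ : ℕ) (a b : ℕ → ℝ) (n : ℕ) (u : ℕ → ℕ) : Prop :=
  AdmissibleDiv ℓ a b n u ∧
  ∀ k, (∃ i ≤ n + 1, u i = k) ↔
    ∀ (n' : ℕ) (u' : ℕ → ℕ), AdmissibleDiv ℓ a b n' u' → ∃ i ≤ n' + 1, u' i = k

/-- The minimal time to cross one block with branching length `A` and obstacle length `B`. -/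
def blockTime (A B : ℝ) : ℝ :=
  A * fval (B ^ 2 / (2 * A ^ 2)) +
    B ^ 2 / (2 * A * (fval (B ^ 2 / (2 * A ^ 2)) - 1 / (2 * fval (B ^ 2 / (2 * A ^ 2)))))

/-- The total optimal time `T*` associated with a division into blocks. -/
def Tstar (a b : ℕ → ℝ) (n : ℕ) (u : ℕ → ℕ) : ℝ :=
  ∑ i ∈ Finset.range (n + 1),
    blockTime (∑ j ∈ Finset.Icc (u i + 1) (u (i + 1)), a j)
      (∑ j ∈ Finset.Icc (u i + 1) (u (i + 1)), b j)

/-- The coefficient appearing in the formula for the optimal `c_m`. -/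
def coefC (ℓ : ℕ) (a b : ℕ → ℝ) (m : ℕ) : ℝ :=
  ((∑ i ∈ Finset.Icc 1 m, a i) * (∑ i ∈ Finset.Icc (m + 1) ℓ, b i) -
    (∑ i ∈ Finset.Icc 1 m, b i) * (∑ i ∈ Finset.Icc (m + 1) ℓ, a i)) /
    (∑ i ∈ Finset.Icc 1 ℓ, b i)

theorem inv_conv_aux (K x x' s t : ℝ) (hK : 0 ≤ K) (hx : 0 < x) (hx' : 0 < x') (hs : 0 ≤ s)
    (ht : 0 ≤ t) (hst : s + t = 1) :
    K / (2 * (s * x + t * x')) ≤ s * (K / (2 * x)) + t * (K / (2 * x')) := by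
  have hp : 0 < s * x + t * x' := by
    rcases hs.eq_or_lt with h | h
    · have : t = 1 := by linarith
      subst this
      rw [← h]
      linarith
    · have := mul_pos h hx
      have := mul_nonneg ht hx'.le
      linarith
  have e : s * (K / (2 * x)) + t * (K / (2 * x')) - K / (2 * (s * x + t * x'))
      = K * (s * t * (x - x') ^ 2) / (2 * x * x' * (s * x + t * x')) := by
    have h : t = 1 - s := by linarith
    subst h
    have := hp.ne'
    field_simp
    ring
  have : 0 ≤ K * (s * t * (x - x') ^ 2) / (2 * x * x' * (s * x + t * x')) := by positivity
  linarith

theorem shrink_aux (A p X : ℝ) (hA : 0 < A) (hX : 0 < X) (h : p ≤ X - A ^ 2 / (2 * X)) :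
    ∃ x, 0 < x ∧ x ≤ X ∧ x - A ^ 2 / (2 * x) = p := by
  have hq : 0 ≤ p ^ 2 + 2 * A ^ 2 := by positivity
  have hsq := Real.sq_sqrt hq
  have hn := Real.sqrt_nonneg (p ^ 2 + 2 * A ^ 2)
  set r := Real.sqrt (p ^ 2 + 2 * A ^ 2) with hr
  have hA2 : 0 < A ^ 2 := by positivity
  have hrp : |p| < r := by
    refine abs_lt_of_sq_lt_sq ?_ hn
    linarith
  obtain ⟨h1, h2⟩ := abs_lt.1 hrp
  have hx : 0 < (p + r) / 2 := by linarith
  refine ⟨(p + r) / 2, hx, ?_, ?_⟩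
  · have h3 : 0 ≤ X ^ 2 - A ^ 2 / 2 - p * X := by
      have : X * (X - A ^ 2 / (2 * X)) = X ^ 2 - A ^ 2 / 2 := by
        field_simp
      nlinarith [mul_le_mul_of_nonneg_left h hX.le]
    by_contra hc
    push Not at hc
    nlinarith [mul_pos (sub_pos.2 hc) (show 0 < X - (p - r) / 2 by linarith)]
  · have := hx.ne'
    have h4 : p + r ≠ 0 := by linarith
    field_simp
    nlinarith

theorem combine_aux (A B x y x' y' s t : ℝ) (hA : 0 < A) (hx : 0 < x) (hx' : 0 < x')
    (hy : 0 < y) (hy' : 0 < y') (hs : 0 ≤ s) (ht : 0 ≤ t) (hst : s + t = 1) :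
    ∃ z w, 0 < z ∧ 0 < w ∧ z + w ≤ s * (x + y) + t * (x' + y') ∧
      z - A ^ 2 / (2 * z) - B ^ 2 / (2 * w) =
        s * (x - A ^ 2 / (2 * x) - B ^ 2 / (2 * y)) +
        t * (x' - A ^ 2 / (2 * x') - B ^ 2 / (2 * y')) := by
  have hX : 0 < s * x + t * x' := (convex_Ioi (0 : ℝ)) hx hx' hs ht hst
  have hY : 0 < s * y + t * y' := (convex_Ioi (0 : ℝ)) hy hy' hs ht hst
  have h1 := inv_conv_aux (A ^ 2) x x' s t (by positivity) hx hx' hs ht hst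
  have h2 := inv_conv_aux (B ^ 2) y y' s t (by positivity) hy hy' hs ht hst
  obtain ⟨z, hz, hzX, hze⟩ := shrink_aux A
    (s * (x - A ^ 2 / (2 * x) - B ^ 2 / (2 * y)) +
        t * (x' - A ^ 2 / (2 * x') - B ^ 2 / (2 * y')) + B ^ 2 / (2 * (s * y + t * y')))
    (s * x + t * x') hA hX (by linarith)
  exact ⟨z, s * y + t * y', hz, hY, by linarith, by linarith⟩

/-- The domain `D^c` is convex. -/
theorem Dc_convex (ℓ : ℕ) (hℓ : 1 ≤ ℓ) (a b : ℕ → ℝ)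
    (ha : ∀ i ∈ Finset.Icc 1 ℓ, 0 < a i) (hb : ∀ i ∈ Finset.Icc 1 ℓ, 0 < b i)
    (N : ℝ) (hN : 1 < N) :
    Convex ℝ {c : ℕ → ℝ | memDc ℓ a b N c} := by
  rintro c ⟨hc0, x, y, hsum, hm⟩ c' ⟨hc0', x', y', hsum', hm'⟩ s t hs ht hst
  have key : ∀ m, ∃ z w : ℝ, m ∈ Finset.Icc 1 ℓ → 0 < z ∧ 0 < w ∧
      z + w ≤ s * (x m + y m) + t * (x' m + y' m) ∧
      z - a m ^ 2 / (2 * z) - b m ^ 2 / (2 * w) =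
        s * (x m - a m ^ 2 / (2 * x m) - b m ^ 2 / (2 * y m)) +
        t * (x' m - a m ^ 2 / (2 * x' m) - b m ^ 2 / (2 * y' m)) := by
    intro m
    by_cases h : m ∈ Finset.Icc 1 ℓ
    · obtain ⟨p1, p2, -, -⟩ := hm m h
      obtain ⟨q1, q2, -, -⟩ := hm' m h
      obtain ⟨z, w, hh⟩ := combine_aux (a m) (b m) (x m) (y m) (x' m) (y' m) s t
        (ha m h) p1 q1 p2 q2 hs ht hst
      exact ⟨z, w, fun _ => hh⟩
    · exact ⟨0, 0, fun h' => absurd h' h⟩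
  choose z w hzw using key
  have hcb : ∀ m, cbar ℓ (s • c + t • c') m = s * cbar ℓ c m + t * cbar ℓ c' m := by
    intro m
    unfold cbar
    split_ifs <;> simp
  refine ⟨?_, z, w, ?_, ?_⟩
  · intro m h
    have h1 := mul_nonneg hs (hc0 m h)
    have h2 := mul_nonneg ht (hc0' m h)
    simpa using add_nonneg h1 h2
  · calc _ ≤ ∑ i ∈ Finset.Icc 1 ℓ, (s * (x i + y i) + t * (x' i + y' i)) :=
          Finset.sum_le_sum fun i hi => (hzw i hi).2.2.1
      _ = s * ∑ i ∈ Finset.Icc 1 ℓ, (x i + y i) + t * ∑ i ∈ Finset.Icc 1 ℓ, (x' i + y' i) := by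
          rw [Finset.sum_add_distrib, Finset.mul_sum, Finset.mul_sum]
      _ ≤ s * 1 + t * 1 := by gcongr
      _ = 1 := by linarith
  · intro m h
    obtain ⟨z0, w0, hle, heq⟩ := hzw m h
    obtain ⟨-, -, p3, p4⟩ := hm m h
    obtain ⟨-, -, q3, q4⟩ := hm' m h
    refine ⟨z0, w0, ?_, ?_⟩
    · have h1 := mul_le_mul_of_nonneg_left p3 hs
      have h2 := mul_le_mul_of_nonneg_left q3 ht
      have h3 : s * N + t * N = N := by rw [← add_mul, hst, one_mul]
      linarith
    · rw [hcb, hcb, ← p4, ← q4]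
      linear_combination heq
end
end

section
/- Let (c_1,…,c_{ℓ−1}) ∈ D^c and set c_0 = c_ℓ = 0. Then there exists exactly one tuple (x_1^c,y_1^c,…,x_ℓ^c,y_ℓ^c) such that, for every m = 1,…,ℓ, (x_m^c, y_m^c) minimizes x + y over D^m(c_{m−1}, c_m); this tuple lies in D̃(c_1,…,c_{ℓ−1}). Moreover, for each m, x_m^c satisfies the first-order condition b_m²/(2(c_{m−1} + x_m^c − a_m²/(2x_m^c) − c_m)²) = 1/(1 + a_m²/(2(x_m^c)²)); it is the largest real solution of this equation, it is the only solution of this equation lying in D^m_x(c_{m−1}, c_m), and it is not a boundary point of D^m_x(c_{m−1}, c_m). -/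
open Finset

noncomputable section

theorem foc_sol_exists (a b k : ℝ) (ha : 0 < a) (hb : 0 < b) :
    ∃ x : ℝ, 0 < x ∧ 0 < k + x - a ^ 2 / (2 * x) ∧
      (k + x - a ^ 2 / (2 * x)) ^ 2 = b ^ 2 / 2 * (1 + a ^ 2 / (2 * x ^ 2)) := by
  obtain ⟨p, hp, hp0⟩ : ∃ p : ℝ, 0 < p ∧ k + p - a ^ 2 / (2 * p) = 0 := by
    have hs : Real.sqrt (k ^ 2 + 2 * a ^ 2) ^ 2 = k ^ 2 + 2 * a ^ 2 :=
      Real.sq_sqrt (by positivity)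
    have hk : |k| < Real.sqrt (k ^ 2 + 2 * a ^ 2) := by
      apply Real.lt_sqrt_of_sq_lt
      rw [sq_abs]; nlinarith
    have hpos : 0 < (Real.sqrt (k ^ 2 + 2 * a ^ 2) - k) / 2 := by
      have := le_abs_self k
      linarith
    refine ⟨_, hpos, ?_⟩
    set p := (Real.sqrt (k ^ 2 + 2 * a ^ 2) - k) / 2 with hpdef
    have hq : Real.sqrt (k ^ 2 + 2 * a ^ 2) = 2 * p + k := by rw [hpdef]; ring
    rw [hq] at hs
    field_simp
    nlinarith
  set R := b ^ 2 / 2 * (1 + a ^ 2 / (2 * p ^ 2)) with hR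
  have hRpos : 0 < R := by positivity
  let g : ℝ → ℝ := fun x => (k + x - a ^ 2 / (2 * x)) ^ 2 - b ^ 2 / 2 * (1 + a ^ 2 / (2 * x ^ 2))
  have hmono : ∀ x, p ≤ x → x - p ≤ k + x - a ^ 2 / (2 * x) := by
    intro x hx
    have : a ^ 2 / (2 * x) ≤ a ^ 2 / (2 * p) := by gcongr
    linarith
  have hcont : ContinuousOn g (Set.Icc p (p + (R + 1))) := by
    have hne : ∀ x ∈ Set.Icc p (p + (R + 1)), x ≠ 0 := fun x hx => (hp.trans_le hx.1).ne'
    have h1 : ContinuousOn (fun x : ℝ => a ^ 2 / (2 * x)) (Set.Icc p (p + (R + 1))) :=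
      ContinuousOn.div (by fun_prop) (by fun_prop) fun x hx => by have := hne x hx; positivity
    have h2 : ContinuousOn (fun x : ℝ => a ^ 2 / (2 * x ^ 2)) (Set.Icc p (p + (R + 1))) :=
      ContinuousOn.div (by fun_prop) (by fun_prop) fun x hx => by have := hne x hx; positivity
    fun_prop
  have hg1 : g p ≤ 0 := by
    simp only [g, hp0]
    have : 0 < b ^ 2 / 2 * (1 + a ^ 2 / (2 * p ^ 2)) := hRpos
    nlinarith
  have hg2 : 0 ≤ g (p + (R + 1)) := by
    have h := hmono (p + (R + 1)) (by linarith)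
    have h2 : b ^ 2 / 2 * (1 + a ^ 2 / (2 * (p + (R + 1)) ^ 2)) ≤ R := by
      rw [hR]; gcongr; linarith
    simp only [g]
    nlinarith
  obtain ⟨x, hx, hgx⟩ := intermediate_value_Icc (by linarith) hcont ⟨hg1, hg2⟩
  have hxp : 0 < x := hp.trans_le hx.1
  have heq : (k + x - a ^ 2 / (2 * x)) ^ 2 = b ^ 2 / 2 * (1 + a ^ 2 / (2 * x ^ 2)) := by
    have : g x = 0 := hgx
    simp only [g] at this
    linarith
  refine ⟨x, hxp, lt_of_le_of_ne ?_ ?_, heq⟩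
  · have := hmono x hx.1
    linarith [hx.1]
  · intro h
    rw [← h] at heq
    have : 0 < b ^ 2 / 2 * (1 + a ^ 2 / (2 * x ^ 2)) := by positivity
    nlinarith

theorem foc_strict_min (a b k x z : ℝ) (ha : 0 < a) (hb : 0 < b) (hx : 0 < x) (hz : 0 < z)
    (hh : 0 < k + x - a ^ 2 / (2 * x))
    (heq : (k + x - a ^ 2 / (2 * x)) ^ 2 = b ^ 2 / 2 * (1 + a ^ 2 / (2 * x ^ 2)))
    (hhz : 0 < k + z - a ^ 2 / (2 * z)) (hne : z ≠ x) :
    x + b ^ 2 / (2 * (k + x - a ^ 2 / (2 * x))) < z + b ^ 2 / (2 * (k + z - a ^ 2 / (2 * z))) := by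
  set h := k + x - a ^ 2 / (2 * x) with hdef
  set h' := k + z - a ^ 2 / (2 * z) with hdef'
  set s := 1 + a ^ 2 / (2 * x ^ 2) with hs
  have hspos : 0 < s := by positivity
  have h1 : h' - h < s * (z - x) := by
    have : s * (z - x) - (h' - h) = a ^ 2 / 2 * (z - x) ^ 2 / (z * x ^ 2) := by
      rw [hs, hdef, hdef']; field_simp; ring
    have h2 : 0 < a ^ 2 / 2 * (z - x) ^ 2 / (z * x ^ 2) := by
      have : z - x ≠ 0 := sub_ne_zero.mpr hne
      positivity
    linarith
  have hb2 : b ^ 2 = 2 * h ^ 2 / s := by rw [heq]; field_simp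
  have h3 : b ^ 2 / (2 * h') - b ^ 2 / (2 * h) + (h' - h) / s = (h' - h) ^ 2 / (s * h') := by
    rw [hb2]; field_simp; ring
  have h4 : 0 ≤ (h' - h) ^ 2 / (s * h') := by positivity
  have h5 : (h' - h) / s < z - x := by rw [div_lt_iff₀ hspos]; linarith
  linarith

theorem foc_largest (a b k x z : ℝ) (ha : 0 < a) (hb : 0 < b) (hx : 0 < x)
    (hh : 0 < k + x - a ^ 2 / (2 * x))
    (heq : (k + x - a ^ 2 / (2 * x)) ^ 2 = b ^ 2 / 2 * (1 + a ^ 2 / (2 * x ^ 2)))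
    (heqz : (k + z - a ^ 2 / (2 * z)) ^ 2 = b ^ 2 / 2 * (1 + a ^ 2 / (2 * z ^ 2))) :
    z ≤ x := by
  by_contra! hlt
  have h1 : a ^ 2 / (2 * z) ≤ a ^ 2 / (2 * x) := by gcongr
  have h2 : b ^ 2 / 2 * (1 + a ^ 2 / (2 * z ^ 2)) ≤ b ^ 2 / 2 * (1 + a ^ 2 / (2 * x ^ 2)) := by
    gcongr
  nlinarith

theorem foc_iff (a b k z : ℝ) (hb : 0 < b) :
    b ^ 2 / (2 * (k + z - a ^ 2 / (2 * z)) ^ 2) = 1 / (1 + a ^ 2 / (2 * z ^ 2)) ↔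
    (k + z - a ^ 2 / (2 * z)) ^ 2 = b ^ 2 / 2 * (1 + a ^ 2 / (2 * z ^ 2)) := by
  have hs : 0 < 1 + a ^ 2 / (2 * z ^ 2) := by positivity
  generalize 1 + a ^ 2 / (2 * z ^ 2) = s at *
  generalize k + z - a ^ 2 / (2 * z) = h at *
  by_cases h0 : h = 0
  · subst h0
    constructor
    · intro hE
      have : 0 < 1 / s := by positivity
      simp at hE
      exact absurd hE hs.ne
    · intro hE
      have : 0 < b ^ 2 / 2 * s := by positivity
      nlinarith
  · rw [div_eq_div_iff (by positivity) hs.ne']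
    constructor <;> intro hE <;> linarith

theorem foc_single (a b : ℕ → ℝ) (N : ℝ) (hN : 1 < N) (m : ℕ) (ha : 0 < a m) (hb : 0 < b m)
    (c c' x0 y0 : ℝ) (h0 : memDm a b N m c c' x0 y0) (h01 : x0 + y0 ≤ 1) :
    ∃ x y : ℝ, isArgminDm a b N m c c' x y ∧
      (∀ x' y', isArgminDm a b N m c c' x' y' → x' = x ∧ y' = y) ∧
      ((b m) ^ 2 / (2 * (c + x - (a m) ^ 2 / (2 * x) - c') ^ 2) =
          1 / (1 + (a m) ^ 2 / (2 * x ^ 2))) ∧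
        (∀ z : ℝ, (b m) ^ 2 / (2 * (c + z - (a m) ^ 2 / (2 * z) - c') ^ 2) =
            1 / (1 + (a m) ^ 2 / (2 * z ^ 2)) → z ≤ x) ∧
        (∀ z ∈ Dmx a b N m c c',
          (b m) ^ 2 / (2 * (c + z - (a m) ^ 2 / (2 * z) - c') ^ 2) =
            1 / (1 + (a m) ^ 2 / (2 * z ^ 2)) → z = x) ∧
        x ∉ frontier (Dmx a b N m c c') := by
  have hrw : ∀ z : ℝ, c + z - (a m) ^ 2 / (2 * z) - c' = (c - c') + z - (a m) ^ 2 / (2 * z) := by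
    intro z; ring
  simp only [hrw, foc_iff _ _ _ _ hb]
  generalize hk : c - c' = k
  have hmem : ∀ x y, memDm a b N m c c' x y →
      0 < x ∧ 0 < k + x - (a m) ^ 2 / (2 * x) ∧
        y = (b m) ^ 2 / (2 * (k + x - (a m) ^ 2 / (2 * x))) := by
    rintro x y ⟨hx, hy, -, he⟩
    have h1 : k + x - (a m) ^ 2 / (2 * x) = (b m) ^ 2 / (2 * y) := by linarith
    refine ⟨hx, by rw [h1]; positivity, ?_⟩
    rw [h1]; field_simp
  have hmem' : ∀ x, 0 < x → 0 < k + x - (a m) ^ 2 / (2 * x) →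
      x + (b m) ^ 2 / (2 * (k + x - (a m) ^ 2 / (2 * x))) ≤ N →
      memDm a b N m c c' x ((b m) ^ 2 / (2 * (k + x - (a m) ^ 2 / (2 * x)))) := by
    intro x hx hh hle
    refine ⟨hx, by positivity, hle, ?_⟩
    have : (b m) ^ 2 / (2 * ((b m) ^ 2 / (2 * (k + x - (a m) ^ 2 / (2 * x))))) =
        k + x - (a m) ^ 2 / (2 * x) := by
      generalize k + x - (a m) ^ 2 / (2 * x) = h at *
      field_simp
    rw [this]; linarith
  obtain ⟨x, hx, hh, heq⟩ := foc_sol_exists (a m) (b m) k ha hb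
  have hstrict : ∀ x' y', memDm a b N m c c' x' y' → x' ≠ x →
      x + (b m) ^ 2 / (2 * (k + x - (a m) ^ 2 / (2 * x))) < x' + y' := by
    intro x' y' h' hne
    obtain ⟨hx', hh', rfl⟩ := hmem x' y' h'
    exact foc_strict_min _ _ k x x' ha hb hx hx' hh heq hh' hne
  have hmin : ∀ x' y', memDm a b N m c c' x' y' →
      x + (b m) ^ 2 / (2 * (k + x - (a m) ^ 2 / (2 * x))) ≤ x' + y' := by
    intro x' y' h'
    by_cases hne : x' = x
    · obtain ⟨hx', hh', rfl⟩ := hmem x' y' h'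
      rw [hne]
    · exact (hstrict x' y' h' hne).le
  have hlt : x + (b m) ^ 2 / (2 * (k + x - (a m) ^ 2 / (2 * x))) < N := by
    have := hmin x0 y0 h0
    linarith
  have hxm := hmem' x hx hh hlt.le
  refine ⟨x, _, ⟨hxm, hmin⟩, ?_, heq, ?_, ?_, ?_⟩
  · rintro x' y' ⟨h', hm'⟩
    have hxx : x' = x := by
      by_contra hne
      have h1 := hstrict x' y' h' hne
      have h2 := hm' _ _ hxm
      linarith
    refine ⟨hxx, ?_⟩
    obtain ⟨-, -, rfl⟩ := hmem x' y' h'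
    rw [hxx]
  · intro z hz
    exact foc_largest _ _ k x z ha hb hx hh heq hz
  · rintro z ⟨y, hzy⟩ hz
    obtain ⟨hz0, hhz, -⟩ := hmem z y hzy
    exact le_antisymm (foc_largest _ _ k x z ha hb hx hh heq hz)
      (foc_largest _ _ k z x ha hb hz0 hhz hz heq)
  · have hint : x ∈ interior (Dmx a b N m c c') := by
      rw [mem_interior_iff_mem_nhds]
      have c1 : ContinuousAt (fun x : ℝ => k + x - (a m) ^ 2 / (2 * x)) x :=
        ContinuousAt.sub (by fun_prop)
          (ContinuousAt.div (by fun_prop) (by fun_prop) (by positivity))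
      have c2 : ContinuousAt
          (fun x : ℝ => x + (b m) ^ 2 / (2 * (k + x - (a m) ^ 2 / (2 * x)))) x :=
        ContinuousAt.add (by fun_prop)
          (ContinuousAt.div (by fun_prop) (continuousAt_const.mul c1) (by positivity))
      filter_upwards [lt_mem_nhds hx, c1.eventually (lt_mem_nhds hh),
        c2.eventually (gt_mem_nhds hlt)] with z h1 h2 h3
      exact ⟨_, hmem' z h1 h2 h3.le⟩
    exact fun hf => hf.2 hint

/-- For `(c_1,…,c_{ℓ−1}) ∈ D^c` there is exactly one tuple
`(x_1^c, y_1^c, …, x_ℓ^c, y_ℓ^c)` such that `(x_m^c, y_m^c)` minimizes `x + y` over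
`D^m(c_{m−1}, c_m)` for each `m`; it lies in `D̃`, each `x_m^c` satisfies the first-order
condition, is the largest real solution of it, the only solution in `D^m_x(c_{m−1}, c_m)`,
and is not a boundary point of `D^m_x(c_{m−1}, c_m)`. -/
theorem argmin_exists_unique_foc (ℓ : ℕ) (hℓ : 1 ≤ ℓ) (a b : ℕ → ℝ)
    (ha : ∀ i ∈ Finset.Icc 1 ℓ, 0 < a i) (hb : ∀ i ∈ Finset.Icc 1 ℓ, 0 < b i)
    (N : ℝ) (hN : 1 < N)
    (c : ℕ → ℝ) (hc : memDc ℓ a b N c) :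
    ∃ xc yc : ℕ → ℝ,
      (∀ m ∈ Finset.Icc 1 ℓ,
        isArgminDm a b N m (cbar ℓ c (m - 1)) (cbar ℓ c m) (xc m) (yc m)) ∧
      memDtilde ℓ a b N c xc yc ∧
      (∀ xc' yc' : ℕ → ℝ,
        (∀ m ∈ Finset.Icc 1 ℓ,
          isArgminDm a b N m (cbar ℓ c (m - 1)) (cbar ℓ c m) (xc' m) (yc' m)) →
        ∀ m ∈ Finset.Icc 1 ℓ, xc' m = xc m ∧ yc' m = yc m) ∧
      (∀ m ∈ Finset.Icc 1 ℓ,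
        ((b m) ^ 2 /
            (2 * (cbar ℓ c (m - 1) + xc m - (a m) ^ 2 / (2 * xc m) - cbar ℓ c m) ^ 2) =
          1 / (1 + (a m) ^ 2 / (2 * (xc m) ^ 2))) ∧
        (∀ z : ℝ,
          (b m) ^ 2 /
              (2 * (cbar ℓ c (m - 1) + z - (a m) ^ 2 / (2 * z) - cbar ℓ c m) ^ 2) =
            1 / (1 + (a m) ^ 2 / (2 * z ^ 2)) → z ≤ xc m) ∧
        (∀ z ∈ Dmx a b N m (cbar ℓ c (m - 1)) (cbar ℓ c m),
          (b m) ^ 2 /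
              (2 * (cbar ℓ c (m - 1) + z - (a m) ^ 2 / (2 * z) - cbar ℓ c m) ^ 2) =
            1 / (1 + (a m) ^ 2 / (2 * z ^ 2)) → z = xc m) ∧
        xc m ∉ frontier (Dmx a b N m (cbar ℓ c (m - 1)) (cbar ℓ c m))) := by
  obtain ⟨-, x0, y0, hsum, hD⟩ := hc
  have hle1 : ∀ m ∈ Finset.Icc 1 ℓ, x0 m + y0 m ≤ 1 := by
    intro m hm
    have h := Finset.single_le_sum (f := fun i => x0 i + y0 i)
      (fun i hi => (add_pos (hD i hi).1 (hD i hi).2.1).le) hm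
    exact le_trans h hsum
  have key := fun m (hm : m ∈ Finset.Icc 1 ℓ) =>
    foc_single a b N hN m (ha m hm) (hb m hm) _ _ _ _ (hD m hm) (hle1 m hm)
  choose! xc yc h1 h2 h3 using key
  refine ⟨xc, yc, h1, ⟨?_, fun m hm => (h1 m hm).1⟩, ?_, h3⟩
  · refine le_trans (Finset.sum_le_sum fun m hm => ?_) hsum
    exact (h1 m hm).2 _ _ (hD m hm)
  · intro xc' yc' h' m hm
    exact h2 m hm _ _ (h' m hm)
end
end

section
/- Let (c_1,…,c_{ℓ−1}) be a point in the interior of D^c and let m ∈ {1,…,ℓ−1}. Then the map c_m ↦ x_m^c (varying the m-th coordinate with all other coordinates fixed) is differentiable at c_m, with derivative ≥ 0; and the map c_m ↦ x_{m+1}^c is differentiable at c_m, with derivative ≤ 0. -/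
open Finset

noncomputable section

open Filter Topology in
/-- The first-order function: at an interior minimizer, `Phi A B x = c' - c`. -/
def PhiAux (A B x : ℝ) : ℝ := x - A * x⁻¹ - B * Real.sqrt (1 + A * (x⁻¹) ^ 2)

lemma PhiAux_hasDerivAt {A B x : ℝ} (hA : 0 < A) (hB : 0 < B) (hx : 0 < x) :
    ∃ d, 0 < d ∧ HasDerivAt (PhiAux A B) d x := by
  have hi := hasDerivAt_inv hx.ne'
  have hpos : 0 < 1 + A * (x⁻¹) ^ 2 := by positivity
  have h1 := (((hi.pow 2).const_mul A).const_add 1).sqrt hpos.ne'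
  have h2 := ((hasDerivAt_id x).sub (hi.const_mul A)).sub (h1.const_mul B)
  refine ⟨_, ?_, h2⟩
  have hs : 0 < Real.sqrt (1 + A * (x⁻¹) ^ 2) := Real.sqrt_pos.2 hpos
  have e1 : 0 < A * (x ^ 2)⁻¹ := by positivity
  have e2 : 0 < B * (A * (2 * x⁻¹ * (x ^ 2)⁻¹) / (2 * Real.sqrt (1 + A * (x⁻¹) ^ 2))) := by
    positivity
  have e3 : (1 - A * -(x ^ 2)⁻¹ - B * (A * (2 * x⁻¹ * -(x ^ 2)⁻¹) /
      (2 * Real.sqrt (1 + A * (x⁻¹) ^ 2)))) = 1 + A * (x ^ 2)⁻¹ +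
      B * (A * (2 * x⁻¹ * (x ^ 2)⁻¹) / (2 * Real.sqrt (1 + A * (x⁻¹) ^ 2))) := by ring
  have : 0 < (1 - A * -(x ^ 2)⁻¹ - B * (A * (2 * x⁻¹ * -(x ^ 2)⁻¹) /
      (2 * Real.sqrt (1 + A * (x⁻¹) ^ 2)))) := by rw [e3]; positivity
  convert this using 1
  simp

lemma PhiAux_strictMono {A B x z : ℝ} (hA : 0 < A) (hB : 0 < B) (hx : 0 < x) (hxz : x < z) :
    PhiAux A B x < PhiAux A B z := by
  have hz : 0 < z := hx.trans hxz
  have h1 : z⁻¹ ≤ x⁻¹ := inv_anti₀ hx hxz.le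
  have h0 : 0 < z⁻¹ := inv_pos.2 hz
  unfold PhiAux
  have h2 : A * z⁻¹ ≤ A * x⁻¹ := by gcongr
  have h3 : B * Real.sqrt (1 + A * (z⁻¹) ^ 2) ≤ B * Real.sqrt (1 + A * (x⁻¹) ^ 2) := by gcongr
  linarith

open Filter Topology in
lemma inverse_deriv_aux {A B : ℝ} (hA : 0 < A) (hB : 0 < B) (x : ℝ → ℝ) (t₀ : ℝ)
    (h : ∀ᶠ t in 𝓝 t₀, 0 < x t ∧ PhiAux A B (x t) = t) :
    ∃ d, 0 ≤ d ∧ HasDerivAt x d t₀ := by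
  obtain ⟨hx0, hP0⟩ := h.self_of_nhds
  obtain ⟨d, hd, hder⟩ := PhiAux_hasDerivAt hA hB hx0
  have hmono : ∀ {u v : ℝ}, 0 < u → 0 < v → PhiAux A B u < PhiAux A B v → u < v := by
    intro u v hu hv huv
    by_contra hcon
    rcases (not_lt.1 hcon).lt_or_eq with h1 | h1
    · exact absurd (PhiAux_strictMono hA hB hv h1) (not_lt.2 huv.le)
    · subst h1; exact lt_irrefl _ huv
  have hcont : ContinuousAt x t₀ := by
    unfold ContinuousAt
    rw [tendsto_order]
    constructor
    · intro l hl
      set l' := max l (x t₀ / 2)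
      have hl'0 : 0 < l' := lt_of_lt_of_le (by linarith) (le_max_right _ _)
      have hl' : l' < x t₀ := max_lt hl (by linarith)
      have h1 := PhiAux_strictMono hA hB hl'0 hl'
      rw [hP0] at h1
      filter_upwards [h, lt_mem_nhds h1] with t ht ht1
      exact lt_of_le_of_lt (le_max_left _ _) (hmono hl'0 ht.1 (by rw [ht.2]; exact ht1))
    · intro u hu
      have h1 := PhiAux_strictMono hA hB hx0 hu
      rw [hP0] at h1
      filter_upwards [h, gt_mem_nhds h1] with t ht ht1
      exact hmono ht.1 (hx0.trans hu) (by rw [ht.2]; exact ht1)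
  exact ⟨d⁻¹, (inv_pos.2 hd).le,
    HasDerivAt.of_local_left_inverse hcont hder hd.ne' (h.mono fun t ht => ht.2)⟩

open Filter Topology in
lemma argmin_PhiAux {a b : ℕ → ℝ} {N : ℝ} {m : ℕ} {c c' x y : ℝ} (hb : 0 < b m)
    (h : isArgminDm a b N m c c' x y) (hN : x + y < N) :
    PhiAux ((a m) ^ 2 / 2) (Real.sqrt ((b m) ^ 2 / 2)) x = c' - c := by
  obtain ⟨⟨hx, hy, -, heq⟩, hmin⟩ := h
  set A := (a m) ^ 2 / 2 with hA
  set K := (b m) ^ 2 / 2 with hK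
  have hKpos : 0 < K := by positivity
  have hA0 : 0 ≤ A := by positivity
  set g : ℝ → ℝ := fun z => z - A * z⁻¹ - (c' - c) with hg
  have hgx : g x = K * y⁻¹ := by
    have e1 : (a m) ^ 2 / (2 * x) = A * x⁻¹ := by rw [hA]; field_simp
    have e2 : (b m) ^ 2 / (2 * y) = K * y⁻¹ := by rw [hK]; field_simp
    rw [e1, e2] at heq
    simp only [hg]; linarith
  have hgpos : 0 < g x := by rw [hgx]; positivity
  have hyx : K * (g x)⁻¹ = y := by rw [hgx]; field_simp
  have hgd : HasDerivAt g (1 - A * -(x ^ 2)⁻¹) x :=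
    ((hasDerivAt_id x).sub ((hasDerivAt_inv hx.ne').const_mul A)).sub_const _
  have hSd : HasDerivAt (fun z => z + K * (g z)⁻¹)
      (1 + K * (-(1 - A * -(x ^ 2)⁻¹) / (g x) ^ 2)) x :=
    (hasDerivAt_id x).add ((hgd.fun_inv hgpos.ne').const_mul K)
  have hloc : IsLocalMin (fun z => z + K * (g z)⁻¹) x := by
    have hlt : x + K * (g x)⁻¹ < N := by rw [hyx]; exact hN
    filter_upwards [lt_mem_nhds hx, hgd.continuousAt.eventually (lt_mem_nhds hgpos),
      hSd.continuousAt.eventually (gt_mem_nhds hlt)] with z hz hgz hSz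
    have := hmin z (K * (g z)⁻¹) ⟨hz, by positivity, hSz.le, ?_⟩
    · show x + K * (g x)⁻¹ ≤ z + K * (g z)⁻¹
      rw [hyx]; exact this
    · have e1 : (a m) ^ 2 / (2 * z) = A * z⁻¹ := by rw [hA]; field_simp
      have e2 : (b m) ^ 2 / (2 * (K * (g z)⁻¹)) = g z := by
        have : (b m) ^ 2 = 2 * K := by rw [hK]; ring
        rw [this]; field_simp
      rw [e1, e2]; simp only [hg]; ring
  have h0 := hloc.hasDerivAt_eq_zero hSd
  have hsq : (g x) ^ 2 = K * (1 + A * (x⁻¹) ^ 2) := by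
    rw [inv_pow]
    have : (g x) ^ 2 ≠ 0 := by positivity
    field_simp at h0 ⊢
    linarith
  have hfin : g x = Real.sqrt K * Real.sqrt (1 + A * (x⁻¹) ^ 2) := by
    rw [← Real.sqrt_mul hKpos.le, ← hsq, Real.sqrt_sq hgpos.le]
  unfold PhiAux
  rw [← hfin]; simp only [hg]; ring

lemma memDc_sum_le {ℓ : ℕ} {a b : ℕ → ℝ} {N : ℝ} {c : ℕ → ℝ} (h : memDc ℓ a b N c) {m : ℕ}
    (hm : m ∈ Finset.Icc 1 ℓ) {x y : ℝ}
    (hmin : isArgminDm a b N m (cbar ℓ c (m - 1)) (cbar ℓ c m) x y) : x + y ≤ 1 := by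
  obtain ⟨-, X, Y, hs, hD⟩ := h
  refine (hmin.2 _ _ (hD m hm)).trans (le_trans ?_ hs)
  exact Finset.single_le_sum (f := fun i => X i + Y i)
    (fun i hi => (add_pos (hD i hi).1 (hD i hi).2.1).le) hm

/-- For `(c_1,…,c_{ℓ−1})` in the interior of `D^c` and `m ∈ {1,…,ℓ−1}`, the map
`c_m ↦ x_m^c` is differentiable with nonnegative derivative and the map `c_m ↦ x_{m+1}^c`
is differentiable with nonpositive derivative. -/
theorem xmc_differentiable_monotone (ℓ : ℕ) (hℓ : 1 ≤ ℓ) (a b : ℕ → ℝ)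
    (ha : ∀ i ∈ Finset.Icc 1 ℓ, 0 < a i) (hb : ∀ i ∈ Finset.Icc 1 ℓ, 0 < b i)
    (N : ℝ) (hN : 1 < N)
    (c : ℕ → ℝ) (hc : c ∈ interior {c' : ℕ → ℝ | memDc ℓ a b N c'})
    (m : ℕ) (hm1 : 1 ≤ m) (hm2 : m < ℓ)
    (xm xm1 : ℝ → ℝ)
    (hxm : ∀ C : ℝ, memDc ℓ a b N (Function.update c m C) →
      ∃ yv : ℝ, isArgminDm a b N m (cbar ℓ (Function.update c m C) (m - 1))
        (cbar ℓ (Function.update c m C) m) (xm C) yv)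
    (hxm1 : ∀ C : ℝ, memDc ℓ a b N (Function.update c m C) →
      ∃ yv : ℝ, isArgminDm a b N (m + 1) (cbar ℓ (Function.update c m C) m)
        (cbar ℓ (Function.update c m C) (m + 1)) (xm1 C) yv) :
    (∃ d : ℝ, 0 ≤ d ∧ HasDerivAt xm d (c m)) ∧
    (∃ d : ℝ, d ≤ 0 ∧ HasDerivAt xm1 d (c m)) := by
  have hcont : Continuous fun C : ℝ => Function.update c m C :=
    continuous_const.update m continuous_id
  have hev : ∀ᶠ C in nhds (c m), memDc ℓ a b N (Function.update c m C) := by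
    have h1 : {c' : ℕ → ℝ | memDc ℓ a b N c'} ∈ nhds (Function.update c m (c m)) := by
      rw [Function.update_eq_self]; exact mem_interior_iff_mem_nhds.1 hc
    exact hcont.continuousAt.eventually h1
  have hmI : m ∈ Finset.Icc 1 ℓ := Finset.mem_Icc.2 ⟨hm1, hm2.le⟩
  have hmI1 : m + 1 ∈ Finset.Icc 1 ℓ := Finset.mem_Icc.2 ⟨by omega, hm2⟩
  have hcm : ∀ C, cbar ℓ (Function.update c m C) m = C := by
    intro C
    have : ¬ (m = 0 ∨ m = ℓ) := by omega
    simp [cbar, this]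
  have hother : ∀ C k, k ≠ m → cbar ℓ (Function.update c m C) k = cbar ℓ c k := by
    intro C k hk
    simp [cbar, Function.update_of_ne hk]
  constructor
  · set p := cbar ℓ c (m - 1)
    have ham := ha m hmI
    have hbm := hb m hmI
    have key : ∀ᶠ C in nhds (c m), 0 < xm C ∧
        PhiAux ((a m) ^ 2 / 2) (Real.sqrt ((b m) ^ 2 / 2)) (xm C) = C - p := by
      filter_upwards [hev] with C hC
      obtain ⟨y, hy⟩ := hxm C hC
      have hle := memDc_sum_le hC hmI hy
      refine ⟨hy.1.1, ?_⟩
      rw [argmin_PhiAux hbm hy (by linarith), hcm, hother C _ (by omega)]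
    have hsh : Filter.Tendsto (fun t : ℝ => t + p) (nhds (c m - p)) (nhds (c m)) := by
      have : Continuous fun t : ℝ => t + p := by fun_prop
      simpa using this.tendsto (c m - p)
    obtain ⟨d, hd, hder⟩ := inverse_deriv_aux (A := (a m) ^ 2 / 2)
      (B := Real.sqrt ((b m) ^ 2 / 2)) (by positivity) (by positivity)
      (fun t => xm (t + p)) (c m - p)
      ((hsh.eventually key).mono fun t ht => ⟨ht.1, by simpa using ht.2⟩)
    refine ⟨d, hd, ?_⟩
    have := HasDerivAt.comp (c m) hder ((hasDerivAt_id (c m)).sub_const p)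
    simpa [Function.comp_def] using this
  · set p := cbar ℓ c (m + 1)
    have ham := ha _ hmI1
    have hbm := hb _ hmI1
    have key : ∀ᶠ C in nhds (c m), 0 < xm1 C ∧
        PhiAux ((a (m + 1)) ^ 2 / 2) (Real.sqrt ((b (m + 1)) ^ 2 / 2)) (xm1 C) = p - C := by
      filter_upwards [hev] with C hC
      obtain ⟨y, hy⟩ := hxm1 C hC
      have hle := memDc_sum_le hC hmI1 hy
      refine ⟨hy.1.1, ?_⟩
      rw [argmin_PhiAux hbm hy (by linarith), hcm, hother C _ (by omega)]
    have hsh : Filter.Tendsto (fun t : ℝ => p - t) (nhds (p - c m)) (nhds (c m)) := by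
      have : Continuous fun t : ℝ => p - t := by fun_prop
      simpa using this.tendsto (p - c m)
    obtain ⟨d, hd, hder⟩ := inverse_deriv_aux (A := (a (m + 1)) ^ 2 / 2)
      (B := Real.sqrt ((b (m + 1)) ^ 2 / 2)) (by positivity) (by positivity)
      (fun t => xm1 (p - t)) (p - c m)
      ((hsh.eventually key).mono fun t ht => ⟨ht.1, by simpa using ht.2⟩)
    refine ⟨-d, by linarith, ?_⟩
    have := HasDerivAt.comp (c m) hder ((hasDerivAt_id (c m)).const_sub p)
    simpa [Function.comp_def] using this
end
end

section
/- Assume the late-expensive-obstacles assumption holds and D̂ is nonempty. Then there is exactly one (c*_1,…,c*_{ℓ−1}) ∈ D^c that minimizes Σ_{m=1}^ℓ (x_m^c + y_m^c) over D^c. It is given by c*_m = [(Σ_{i=1}^m a_i)(Σ_{i=m+1}^ℓ b_i) − (Σ_{i=1}^m b_i)(Σ_{i=m+1}^ℓ a_i)]/(Σ_{i=1}^ℓ b_i) · (f(c̃) − 1/(2f(c̃))) for m = 1,…,ℓ−1, and the corresponding optimal times are x_m^{c*} = a_m f(c̃) and y_m^{c*} = b_m (Σ_{i=1}^ℓ b_i)/(2(Σ_{i=1}^ℓ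 a_i)(f(c̃) − 1/(2f(c̃)))) for m = 1,…,ℓ. -/
open Finset

noncomputable section

/-- The net gain of one block. -/
def hgain (a b x y : ℝ) : ℝ := x - a ^ 2 / (2 * x) - b ^ 2 / (2 * y)

/-- The convexity gap. -/
def gapf (f k a b x y : ℝ) : ℝ := k ^ 2 * (x - a * f) ^ 2 / (f ^ 2 * x) + (y - b * k) ^ 2 / y

lemma gap_identity (f k a b x y : ℝ) (hf : 0 < f) (hx : 0 < x) (hy : 0 < y)
    (hk : 1 - 2 * k ^ 2 = k ^ 2 / f ^ 2) :
    x + y = 2 * k ^ 2 * hgain a b x y + (2 * k ^ 2 * a / f + 2 * k * b) + gapf f k a b x y := by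
  have hk' : x = 2 * k ^ 2 * x + k ^ 2 / f ^ 2 * x := by rw [← hk]; ring
  have : 2 * k ^ 2 * hgain a b x y + (2 * k ^ 2 * a / f + 2 * k * b) + gapf f k a b x y
      = (2 * k ^ 2 * x + k ^ 2 / f ^ 2 * x) + y := by
    unfold hgain gapf
    field_simp
    ring
  rw [this, ← hk']

lemma gapf_nonneg (f k a b x y : ℝ) (hx : 0 < x) (hy : 0 < y) :
    0 ≤ gapf f k a b x y := by
  unfold gapf; positivity

lemma gapf_eq_zero (f k a b x y : ℝ) (hf : 0 < f) (hk : 0 < k) (hx : 0 < x) (hy : 0 < y)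
    (h : gapf f k a b x y = 0) : x = a * f ∧ y = b * k := by
  unfold gapf at h
  have h1 : 0 ≤ k ^ 2 * (x - a * f) ^ 2 / (f ^ 2 * x) := by positivity
  have h2 : 0 ≤ (y - b * k) ^ 2 / y := by positivity
  have e1 : k ^ 2 * (x - a * f) ^ 2 / (f ^ 2 * x) = 0 := by linarith
  have e2 : (y - b * k) ^ 2 / y = 0 := by linarith
  rw [div_eq_zero_iff] at e1 e2
  constructor
  · rcases e1 with e | e
    · rcases mul_eq_zero.1 e with e | e
      · exact absurd e (by positivity)
      · have := pow_eq_zero_iff (two_ne_zero) |>.1 e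
        linarith
    · exact absurd e (by positivity)
  · rcases e2 with e | e
    · have := pow_eq_zero_iff (two_ne_zero) |>.1 e
      linarith
    · exact absurd e hy.ne'

lemma gapf_self (f k a b : ℝ) : gapf f k a b (a * f) (b * k) = 0 := by
  simp [gapf]

lemma sum_lower (ℓ : ℕ) (a b x y : ℕ → ℝ) (f k : ℝ) (hf : 0 < f)
    (hk : 1 - 2 * k ^ 2 = k ^ 2 / f ^ 2)
    (hpos : ∀ i ∈ Finset.Icc 1 ℓ, 0 < x i ∧ 0 < y i)
    (h0 : ∑ i ∈ Finset.Icc 1 ℓ, hgain (a i) (b i) (x i) (y i) = 0) :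
    ∑ i ∈ Finset.Icc 1 ℓ, (x i + y i) =
      ∑ i ∈ Finset.Icc 1 ℓ, (2 * k ^ 2 * a i / f + 2 * k * b i) +
      ∑ i ∈ Finset.Icc 1 ℓ, gapf f k (a i) (b i) (x i) (y i) := by
  rw [Finset.sum_congr rfl (fun i hi => gap_identity f k (a i) (b i) (x i) (y i) hf
    (hpos i hi).1 (hpos i hi).2 hk), Finset.sum_add_distrib, Finset.sum_add_distrib,
    ← Finset.mul_sum, h0]
  ring

lemma telescope (ℓ : ℕ) (C h : ℕ → ℝ) (h0 : C 0 = 0)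
    (H : ∀ m ∈ Finset.Icc 1 ℓ, C (m - 1) + h m = C m) (n : ℕ) (hn : n ≤ ℓ) :
    ∑ i ∈ Finset.Icc 1 n, h i = C n := by
  induction n with
  | zero => simp [h0]
  | succ n ih =>
    rw [Finset.sum_Icc_succ_top (by omega), ih (by omega)]
    have := H (n + 1) (Finset.mem_Icc.2 ⟨by omega, hn⟩)
    simpa using this

lemma fval_facts (c : ℝ) (hc : 0 < c) :
    0 < fval c ∧ 0 < fval c - 1 / (2 * fval c) ∧
    (fval c - 1 / (2 * fval c)) ^ 2 = c * (1 + 1 / (2 * fval c ^ 2)) := by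
  have hr : 0 ≤ Real.sqrt (c ^ 2 / 4 + c) := Real.sqrt_nonneg _
  have hr2 : Real.sqrt (c ^ 2 / 4 + c) ^ 2 = c ^ 2 / 4 + c := Real.sq_sqrt (by positivity)
  have hs : fval c ^ 2 = (1 + c) / 2 + Real.sqrt (c ^ 2 / 4 + c) := Real.sq_sqrt (by positivity)
  have hf : 0 < fval c := Real.sqrt_pos.2 (by positivity)
  set f := fval c
  set r := Real.sqrt (c ^ 2 / 4 + c)
  have key : (f ^ 2) ^ 2 - (1 + c) * f ^ 2 + 1 / 4 - c / 2 = 0 := by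
    rw [hs]; linear_combination hr2
  refine ⟨hf, ?_, ?_⟩
  · have : f - 1 / (2 * f) = (f ^ 2 - 1 / 2) / f := by field_simp
    rw [this]
    apply div_pos _ hf
    rw [hs]; linarith
  · field_simp
    linear_combination 4 * key

lemma cbar_zero (ℓ : ℕ) (c : ℕ → ℝ) : cbar ℓ c 0 = 0 := by simp [cbar]

lemma cbar_last (ℓ : ℕ) (c : ℕ → ℝ) : cbar ℓ c ℓ = 0 := by simp [cbar]

lemma sum_split (ℓ m : ℕ) (hm : m ≤ ℓ) (u : ℕ → ℝ) :
    ∑ i ∈ Finset.Icc 1 m, u i + ∑ i ∈ Finset.Icc (m + 1) ℓ, u i = ∑ i ∈ Finset.Icc 1 ℓ, u i := by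
  have h := Finset.sum_Ioc_consecutive u (Nat.zero_le m) hm
  simpa only [← Finset.Icc_add_one_left_eq_Ioc, zero_add] using h

/-- Under the late-expensive-obstacles assumption, if `D̂` is nonempty, there is
exactly one minimizer `(c*_1,…,c*_{ℓ−1}) ∈ D^c` of `Σ_m (x_m^c + y_m^c)`, given by the
explicit formula, with the corresponding optimal times `x_m^{c*} = a_m f(c̃)` and
`y_m^{c*} = b_m (Σ b_i) / (2 (Σ a_i)(f(c̃) − 1/(2 f(c̃))))`. -/
theorem optimal_c_late_expensive (ℓ : ℕ) (hℓ : 1 ≤ ℓ) (a b : ℕ → ℝ)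
    (ha : ∀ i ∈ Finset.Icc 1 ℓ, 0 < a i) (hb : ∀ i ∈ Finset.Icc 1 ℓ, 0 < b i)
    (N : ℝ) (hN : 1 < N)
    (hlate : LateExpensive ℓ a b)
    (hDhat : ∃ x y : ℕ → ℝ, memDhat ℓ a b x y)
    (xc yc : (ℕ → ℝ) → ℕ → ℝ)
    (hxcyc : ∀ c : ℕ → ℝ, memDc ℓ a b N c → ∀ m ∈ Finset.Icc 1 ℓ,
      isArgminDm a b N m (cbar ℓ c (m - 1)) (cbar ℓ c m) (xc c m) (yc c m)) :
    ∃ cs : ℕ → ℝ, memDc ℓ a b N cs ∧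
      (∀ c' : ℕ → ℝ, memDc ℓ a b N c' →
        (∑ m ∈ Finset.Icc 1 ℓ, (xc cs m + yc cs m)) ≤
          ∑ m ∈ Finset.Icc 1 ℓ, (xc c' m + yc c' m)) ∧
      (∀ c' : ℕ → ℝ, memDc ℓ a b N c' →
        (∀ c'' : ℕ → ℝ, memDc ℓ a b N c'' →
          (∑ m ∈ Finset.Icc 1 ℓ, (xc c' m + yc c' m)) ≤
            ∑ m ∈ Finset.Icc 1 ℓ, (xc c'' m + yc c'' m)) →
        ∀ m ∈ Finset.Icc 1 (ℓ - 1), c' m = cs m) ∧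
      (∀ m ∈ Finset.Icc 1 (ℓ - 1),
        cs m = coefC ℓ a b m * (fval (ctilde ℓ a b) - 1 / (2 * fval (ctilde ℓ a b)))) ∧
      (∀ m ∈ Finset.Icc 1 ℓ,
        xc cs m = a m * fval (ctilde ℓ a b) ∧
        yc cs m = b m * (∑ i ∈ Finset.Icc 1 ℓ, b i) /
          (2 * (∑ i ∈ Finset.Icc 1 ℓ, a i) *
            (fval (ctilde ℓ a b) - 1 / (2 * fval (ctilde ℓ a b))))) := by
  set A := ∑ i ∈ Finset.Icc 1 ℓ, a i with hA
  set B := ∑ i ∈ Finset.Icc 1 ℓ, b i with hB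
  have hne : (Finset.Icc 1 ℓ).Nonempty := ⟨1, Finset.mem_Icc.2 ⟨le_rfl, hℓ⟩⟩
  have hApos : 0 < A := Finset.sum_pos ha hne
  have hBpos : 0 < B := Finset.sum_pos hb hne
  have hct : ctilde ℓ a b = B ^ 2 / (2 * A ^ 2) := rfl
  have hctpos : 0 < ctilde ℓ a b := by rw [hct]; positivity
  obtain ⟨hf, hg, hfg⟩ := fval_facts _ hctpos
  set f := fval (ctilde ℓ a b) with hfdef
  set g := f - 1 / (2 * f) with hgdef
  obtain ⟨k, hkdef⟩ : ∃ k, k = B / (2 * A * g) := ⟨_, rfl⟩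
  have hkpos : 0 < k := by rw [hkdef]; positivity
  have hk : 1 - 2 * k ^ 2 = k ^ 2 / f ^ 2 := by
    have e : 2 * k ^ 2 * g ^ 2 = ctilde ℓ a b := by
      rw [hkdef, hct]; field_simp
    have e2 : g ^ 2 * 1 = g ^ 2 * (2 * k ^ 2 * (1 + 1 / (2 * f ^ 2))) := by
      rw [mul_one]
      nth_rewrite 1 [hfg]
      rw [← e]; ring
    have e3 := mul_left_cancel₀ (by positivity) e2
    have e4 : 2 * k ^ 2 * (1 + 1 / (2 * f ^ 2)) = 2 * k ^ 2 + k ^ 2 / f ^ 2 := by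
      field_simp
    linarith
  have hstarpos : ∀ i ∈ Finset.Icc 1 ℓ, 0 < a i * f ∧ 0 < b i * k := fun i hi =>
    ⟨mul_pos (ha i hi) hf, mul_pos (hb i hi) hkpos⟩
  have hgs : ∀ i ∈ Finset.Icc 1 ℓ, hgain (a i) (b i) (a i * f) (b i * k)
      = g * (a i * B - b i * A) / B := by
    intro i hi
    have h1 := ha i hi
    have h2 := hb i hi
    have e1 : hgain (a i) (b i) (a i * f) (b i * k) = a i * g - b i / (2 * k) := by
      rw [hgdef]; unfold hgain; field_simp
    rw [e1, hkdef]; field_simp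
  have hpartial : ∀ m ≤ ℓ, ∑ i ∈ Finset.Icc 1 m, hgain (a i) (b i) (a i * f) (b i * k)
      = coefC ℓ a b m * g := by
    intro m hm
    rw [Finset.sum_congr rfl (fun i hi => hgs i (by
      rw [Finset.mem_Icc] at hi ⊢; omega))]
    rw [← Finset.sum_div, ← Finset.mul_sum, Finset.sum_sub_distrib, ← Finset.sum_mul,
      ← Finset.sum_mul]
    have ea := sum_split ℓ m hm a
    have eb := sum_split ℓ m hm b
    unfold coefC
    rw [← hB]
    rw [← hA] at ea
    rw [← hB] at eb
    rw [div_mul_eq_mul_div]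
    congr 1
    rw [← ea, ← eb]
    ring
  have hcbar : ∀ m, cbar ℓ (fun m => coefC ℓ a b m * g) m = coefC ℓ a b m * g := by
    intro m
    unfold cbar
    split_ifs with h
    · rcases h with h | h <;> subst h <;> simp [coefC]
    · rfl
  have hstar0 : ∑ i ∈ Finset.Icc 1 ℓ, hgain (a i) (b i) (a i * f) (b i * k) = 0 := by
    rw [hpartial ℓ le_rfl]; simp [coefC]
  have hsumstar := sum_lower ℓ a b (fun i => a i * f) (fun i => b i * k) f k hf hk hstarpos hstar0
  simp only [gapf_self, Finset.sum_const_zero, add_zero] at hsumstar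
  have hle1 : ∑ i ∈ Finset.Icc 1 ℓ, (a i * f + b i * k) ≤ 1 := by
    obtain ⟨x, y, ⟨hp, hs, _⟩, h0⟩ := hDhat
    have := sum_lower ℓ a b x y f k hf hk hp h0
    have h2 : 0 ≤ ∑ i ∈ Finset.Icc 1 ℓ, gapf f k (a i) (b i) (x i) (y i) :=
      Finset.sum_nonneg fun i hi => gapf_nonneg _ _ _ _ _ _ (hp i hi).1 (hp i hi).2
    linarith
  have hmemstar : ∀ m ∈ Finset.Icc 1 ℓ, memDm a b N m
      (cbar ℓ (fun m => coefC ℓ a b m * g) (m - 1)) (cbar ℓ (fun m => coefC ℓ a b m * g) m)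
      (a m * f) (b m * k) := by
    intro m hm
    refine ⟨(hstarpos m hm).1, (hstarpos m hm).2, ?_, ?_⟩
    · have := Finset.single_le_sum (f := fun i => a i * f + b i * k)
        (fun i hi => (add_pos (hstarpos i hi).1 (hstarpos i hi).2).le) hm
      linarith
    · rw [Finset.mem_Icc] at hm
      obtain ⟨n, rfl⟩ : ∃ n, m = n + 1 := ⟨m - 1, by omega⟩
      rw [hcbar, hcbar, ← hpartial _ hm.2, Finset.sum_Icc_succ_top (by omega),
        Nat.add_sub_cancel, hpartial n (by omega)]
      unfold hgain
      ring
  have hcs : memDc ℓ a b N (fun m => coefC ℓ a b m * g) := by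
    refine ⟨?_, fun i => a i * f, fun i => b i * k, hle1, hmemstar⟩
    intro m hm
    rw [Finset.mem_Icc] at hm
    refine mul_nonneg ?_ hg.le
    unfold coefC
    refine div_nonneg ?_ hBpos.le
    have h := hlate m hm.1 (by omega)
    have p1 : 0 < ∑ i ∈ Finset.Icc 1 m, a i := Finset.sum_pos
      (fun i hi => ha i (by rw [Finset.mem_Icc] at hi ⊢; omega))
      ⟨1, Finset.mem_Icc.2 ⟨le_rfl, hm.1⟩⟩
    have p2 : 0 < ∑ i ∈ Finset.Icc (m + 1) ℓ, a i := Finset.sum_pos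
      (fun i hi => ha i (by rw [Finset.mem_Icc] at hi ⊢; omega))
      ⟨ℓ, Finset.mem_Icc.2 ⟨by omega, le_rfl⟩⟩
    rw [div_lt_div_iff₀ p1 p2] at h
    linarith
  -- properties of the minimizers for an arbitrary admissible `c`
  have hpos : ∀ c, memDc ℓ a b N c → ∀ i ∈ Finset.Icc 1 ℓ, 0 < xc c i ∧ 0 < yc c i :=
    fun c hc i hi => ⟨(hxcyc c hc i hi).1.1, (hxcyc c hc i hi).1.2.1⟩
  have htel : ∀ c, memDc ℓ a b N c → ∀ n ≤ ℓ,
      ∑ i ∈ Finset.Icc 1 n, hgain (a i) (b i) (xc c i) (yc c i) = cbar ℓ c n := by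
    intro c hc n hn
    refine telescope ℓ (cbar ℓ c) (fun i => hgain (a i) (b i) (xc c i) (yc c i))
      (cbar_zero _ _) ?_ n hn
    intro m hm
    have := (hxcyc c hc m hm).1.2.2.2
    simp only [hgain]
    linarith
  have hlow : ∀ c, memDc ℓ a b N c → ∑ i ∈ Finset.Icc 1 ℓ, (xc c i + yc c i) =
      ∑ i ∈ Finset.Icc 1 ℓ, (a i * f + b i * k) +
      ∑ i ∈ Finset.Icc 1 ℓ, gapf f k (a i) (b i) (xc c i) (yc c i) := by
    intro c hc
    rw [hsumstar]
    exact sum_lower ℓ a b (xc c) (yc c) f k hf hk (hpos c hc)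
      (by rw [htel c hc ℓ le_rfl, cbar_last])
  have hgap : ∀ c, memDc ℓ a b N c → ∀ i ∈ Finset.Icc 1 ℓ,
      0 ≤ gapf f k (a i) (b i) (xc c i) (yc c i) := fun c hc i hi =>
    gapf_nonneg _ _ _ _ _ _ (hpos c hc i hi).1 (hpos c hc i hi).2
  have hrig : ∀ c, memDc ℓ a b N c →
      ∑ i ∈ Finset.Icc 1 ℓ, (xc c i + yc c i) ≤ ∑ i ∈ Finset.Icc 1 ℓ, (a i * f + b i * k) →
      ∀ i ∈ Finset.Icc 1 ℓ, xc c i = a i * f ∧ yc c i = b i * k := by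
    intro c hc hle i hi
    have h1 := hlow c hc
    have h2 := Finset.sum_nonneg (hgap c hc)
    have h3 : ∑ i ∈ Finset.Icc 1 ℓ, gapf f k (a i) (b i) (xc c i) (yc c i) = 0 := by linarith
    have h4 := (Finset.sum_eq_zero_iff_of_nonneg (hgap c hc)).1 h3 i hi
    exact gapf_eq_zero _ _ _ _ _ _ hf hkpos (hpos c hc i hi).1 (hpos c hc i hi).2 h4
  have hcsle : ∑ i ∈ Finset.Icc 1 ℓ, (xc (fun m => coefC ℓ a b m * g) i +
      yc (fun m => coefC ℓ a b m * g) i) ≤ ∑ i ∈ Finset.Icc 1 ℓ, (a i * f + b i * k) :=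
    Finset.sum_le_sum fun i hi => (hxcyc _ hcs i hi).2 _ _ (hmemstar i hi)
  refine ⟨fun m => coefC ℓ a b m * g, hcs, ?_, ?_, fun _ _ => rfl, ?_⟩
  · intro c hc
    have h1 := hlow c hc
    have h2 := Finset.sum_nonneg (hgap c hc)
    linarith
  · intro c hc hmin m hm
    have hr := hrig c hc ((hmin _ hcs).trans hcsle)
    rw [Finset.mem_Icc] at hm
    have h1 := htel c hc m (by omega)
    have h2 : cbar ℓ c m = c m := by
      unfold cbar; rw [if_neg (by omega)]
    rw [h2] at h1
    rw [← h1]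
    show _ = coefC ℓ a b m * g
    rw [← hpartial m (by omega)]
    refine Finset.sum_congr rfl fun i hi => ?_
    have := hr i (by rw [Finset.mem_Icc] at hi ⊢; omega)
    rw [this.1, this.2]
  · intro m hm
    have := hrig _ hcs hcsle m hm
    refine ⟨this.1, ?_⟩
    rw [this.2, hkdef, mul_div_assoc]
end
end

section
/- Let ℓ ≥ 1, let a_1,…,a_ℓ, b_1,…,b_ℓ be positive reals, let x₁ > 0, and set κ = x₁/a₁ − a₁/(2x₁). Then the system of linear equations c_m = ((b_{m+1}a_m − b_m a_{m+1})/(b_m + b_{m+1}))·κ + (b_{m+1}/(b_m + b_{m+1}))·c_{m−1} + (b_m/(b_m + b_{m+1}))·c_{m+1}, for m = 1,…,ℓ−1 with the conventions c_0 = c_ℓ = 0, has exactly one solution (c_1,…,c_{ℓ−1}) ∈ ℝ^{ℓ−1}, namely c_m = [(Σ_{i=1}^m a_i)(Σ_{i=m+1}^ℓ b_i) − (Σ_{i=1}^m b_i)(Σ_{i=m+1}^ℓ a_i)]/(Σ_{i=1}^ℓ b_i) · κ. -/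
open Finset

noncomputable section

theorem coefC_eq_aux (ℓ : ℕ) (a b : ℕ → ℝ) (m : ℕ) (hm : m ≤ ℓ)
    (hB : (∑ i ∈ Finset.Icc 1 ℓ, b i) ≠ 0) :
    coefC ℓ a b m = (∑ i ∈ Finset.Icc 1 m, a i) -
      (∑ i ∈ Finset.Icc 1 m, b i) * (∑ i ∈ Finset.Icc 1 ℓ, a i) / (∑ i ∈ Finset.Icc 1 ℓ, b i) := by
  have split : ∀ f : ℕ → ℝ, ∑ i ∈ Finset.Icc (m + 1) ℓ, f i =
      (∑ i ∈ Finset.Icc 1 ℓ, f i) - ∑ i ∈ Finset.Icc 1 m, f i := by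
    intro f
    have key : ∀ n, m ≤ n → (∑ i ∈ Finset.Icc (m + 1) n, f i) =
        (∑ i ∈ Finset.Icc 1 n, f i) - ∑ i ∈ Finset.Icc 1 m, f i := by
      intro n hn
      induction n, hn using Nat.le_induction with
      | base => simp
      | succ n hn ih =>
        rw [Finset.sum_Icc_succ_top (by omega), Finset.sum_Icc_succ_top (by omega), ih]
        ring
    exact key ℓ hm
  unfold coefC
  rw [split a, split b]
  field_simp
  ring

/-- The linear system `c_m = ((b_{m+1}a_m − b_m a_{m+1})/(b_m+b_{m+1}))·κ
+ (b_{m+1}/(b_m+b_{m+1}))·c_{m−1} + (b_m/(b_m+b_{m+1}))·c_{m+1}` (with `c_0 = c_ℓ = 0`)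
has exactly one solution, given by the explicit formula. -/
theorem linear_system_unique_solution (ℓ : ℕ) (hℓ : 1 ≤ ℓ) (a b : ℕ → ℝ)
    (ha : ∀ i ∈ Finset.Icc 1 ℓ, 0 < a i) (hb : ∀ i ∈ Finset.Icc 1 ℓ, 0 < b i)
    (x1 : ℝ) (hx1 : 0 < x1) (κ : ℝ) (hκ : κ = x1 / a 1 - a 1 / (2 * x1))
    (c : ℕ → ℝ) :
    (∀ m : ℕ, 1 ≤ m → m < ℓ →
      c m = (b (m + 1) * a m - b m * a (m + 1)) / (b m + b (m + 1)) * κ +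
        b (m + 1) / (b m + b (m + 1)) * cbar ℓ c (m - 1) +
        b m / (b m + b (m + 1)) * cbar ℓ c (m + 1)) ↔
    (∀ m : ℕ, 1 ≤ m → m < ℓ → c m = coefC ℓ a b m * κ) := by
  have hBpos : 0 < ∑ i ∈ Finset.Icc 1 ℓ, b i :=
    Finset.sum_pos hb ⟨1, Finset.mem_Icc.2 ⟨le_refl 1, hℓ⟩⟩
  have hbp : ∀ i, 1 ≤ i → i ≤ ℓ → 0 < b i := fun i h1 h2 => hb i (Finset.mem_Icc.2 ⟨h1, h2⟩)
  have hd0 : cbar ℓ c 0 = 0 := by simp [cbar]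
  have hdl : cbar ℓ c ℓ = 0 := by simp [cbar]
  have hdm : ∀ m, 1 ≤ m → m < ℓ → cbar ℓ c m = c m := by
    intro m h1 h2
    have : ¬ (m = 0 ∨ m = ℓ) := by omega
    simp [cbar, this]
  constructor
  · intro h
    obtain ⟨t, ht⟩ : ∃ t, t = (cbar ℓ c 1 - a 1 * κ) / b 1 := ⟨_, rfl⟩
    have hb1 := hbp 1 le_rfl hℓ
    have step : ∀ m, m + 1 ≤ ℓ →
        cbar ℓ c (m + 1) - cbar ℓ c m - a (m + 1) * κ = t * b (m + 1) := by
      intro m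
      induction m with
      | zero =>
        intro _
        rw [ht, hd0]
        simp only [zero_add]
        field_simp
        ring
      | succ m ih =>
        intro hm
        have ih' := ih (by omega)
        have e := h (m + 1) (by omega) (by omega)
        rw [← hdm (m + 1) (by omega) (by omega)] at e
        simp only [Nat.add_sub_cancel] at e
        have p1 := hbp (m + 1) (by omega) (by omega)
        have p2 := hbp (m + 1 + 1) (by omega) (by omega)
        have p3 : b (m + 1) + b (m + 1 + 1) ≠ 0 := by positivity
        field_simp at e
        apply mul_left_cancel₀ p1.ne'
        linear_combination -e + b (m + 1 + 1) * ih'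
    have sol : ∀ m, m ≤ ℓ → cbar ℓ c m =
        (∑ i ∈ Finset.Icc 1 m, a i) * κ + t * ∑ i ∈ Finset.Icc 1 m, b i := by
      intro m
      induction m with
      | zero => intro _; simp [hd0]
      | succ m ih =>
        intro hm
        rw [Finset.sum_Icc_succ_top (by omega), Finset.sum_Icc_succ_top (by omega)]
        linear_combination step m hm + ih (by omega)
    intro m h1 h2
    have e1 := sol m h2.le
    have e2 := sol ℓ le_rfl
    rw [hdm m h1 h2] at e1
    rw [hdl] at e2
    rw [coefC_eq_aux ℓ a b m h2.le hBpos.ne', e1]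
    field_simp
    linear_combination (-(∑ i ∈ Finset.Icc 1 m, b i)) * e2
  · intro h
    have sol : ∀ m, m ≤ ℓ → cbar ℓ c m = ((∑ i ∈ Finset.Icc 1 m, a i) -
      (∑ i ∈ Finset.Icc 1 m, b i) * (∑ i ∈ Finset.Icc 1 ℓ, a i) /
        (∑ i ∈ Finset.Icc 1 ℓ, b i)) * κ := by
      intro m hm
      rcases Nat.eq_zero_or_pos m with rfl | h1
      · simp [hd0]
      · rcases hm.eq_or_lt with rfl | h2
        · rw [hdl]
          field_simp
          ring
        · rw [hdm m h1 h2, h m h1 h2, coefC_eq_aux ℓ a b m hm hBpos.ne']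
    intro m h1 h2
    obtain ⟨k, rfl⟩ : ∃ k, m = k + 1 := ⟨m - 1, by omega⟩
    rw [← hdm (k + 1) h1 h2]
    simp only [Nat.add_sub_cancel]
    rw [sol (k + 1 + 1) (by omega), sol (k + 1) (by omega), sol k (by omega)]
    have p1 := hbp (k + 1) (by omega) (by omega)
    have p2 := hbp (k + 1 + 1) (by omega) (by omega)
    have p3 : b (k + 1) + b (k + 1 + 1) ≠ 0 := by positivity
    rw [Finset.sum_Icc_succ_top (b := k + 1) (by omega) a,
      Finset.sum_Icc_succ_top (b := k + 1) (by omega) b,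
      Finset.sum_Icc_succ_top (b := k) (by omega) a,
      Finset.sum_Icc_succ_top (b := k) (by omega) b]
    have hB0 := hBpos.ne'
    generalize (∑ i ∈ Finset.Icc 1 ℓ, b i) = B at *
    field_simp
    ring
end
end

section
/- Assume D̂ is nonempty and the late-expensive-obstacles assumption holds. Then the maximum of the objective function F over D̂ equals (h*)²/2, where h* = √2 · (1 − (Σ_{i=1}^ℓ a_i) f(c̃) − (Σ_{i=1}^ℓ b_i)²/(2(Σ_{i=1}^ℓ a_i)(f(c̃) − 1/(2f(c̃))))). -/
open Finset

noncomputable section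

lemma aux_f {c : ℝ} (hc : 0 < c) : 0 < fval c ∧ 0 < 2 * fval c ^ 2 - 1 ∧
    (2 * fval c ^ 2 - 1) ^ 2 = 2 * c * (2 * fval c ^ 2 + 1) := by
  have hs := Real.sq_sqrt (show 0 ≤ c ^ 2 / 4 + c by positivity)
  have hs0 := Real.sqrt_nonneg (c ^ 2 / 4 + c)
  have hpos : 0 < (1 + c) / 2 + Real.sqrt (c ^ 2 / 4 + c) := by positivity
  have hf : fval c ^ 2 = (1 + c) / 2 + Real.sqrt (c ^ 2 / 4 + c) := Real.sq_sqrt hpos.le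
  refine ⟨Real.sqrt_pos.mpr hpos, ?_, ?_⟩
  · rw [hf]; linarith
  · rw [hf]; nlinarith

lemma aux_min {t s c f : ℝ} (hc : 0 < c) (ht : 0 < t) (hs : 0 < s) (hf : 0 < f)
    (hu : 0 < 2 * f ^ 2 - 1) (hfe : (2 * f ^ 2 - 1) ^ 2 = 2 * c * (2 * f ^ 2 + 1))
    (h : 2 * c * t ≤ s * (2 * t ^ 2 - 1)) :
    f + c / (f - 1 / (2 * f)) ≤ t + s := by
  have hv : 0 < 2 * t ^ 2 - 1 := by
    have : 0 < s * (2 * t ^ 2 - 1) := lt_of_lt_of_le (by positivity) h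
    exact (pos_iff_pos_of_mul_pos this).mp hs
  have h1 : 0 < 2 * f ^ 2 + 1 := by positivity
  have e : f + c / (f - 1 / (2 * f)) = 4 * f ^ 3 / (2 * f ^ 2 + 1) := by
    have hg : f - 1 / (2 * f) = (2 * f ^ 2 - 1) / (2 * f) := by field_simp
    have hcc : c = (2 * f ^ 2 - 1) ^ 2 / (2 * (2 * f ^ 2 + 1)) := by
      rw [eq_div_iff (by positivity)]; linarith
    rw [hg, hcc]
    have := hu.ne'
    field_simp
    ring
  rw [e, div_le_iff₀ h1]
  have key : 0 ≤ ((t + s) * (2 * f ^ 2 + 1) - 4 * f ^ 3) * (2 * t ^ 2 - 1) := by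
    have h2 := mul_le_mul_of_nonneg_right h h1.le
    have h3 : 0 ≤ (t - f) ^ 2 * (2 * (2 * f ^ 2 + 1) * t + 4 * f) := by positivity
    have h4 : (2 * f ^ 2 - 1) ^ 2 * t = 2 * c * (2 * f ^ 2 + 1) * t := by rw [hfe]
    nlinarith
  have := nonneg_of_mul_nonneg_left key hv
  linarith

lemma aux_F {ℓ : ℕ} {a b x y : ℕ → ℝ}
    (h : (∑ i ∈ Finset.Icc 1 ℓ, (x i - (a i) ^ 2 / (2 * x i) - (b i) ^ 2 / (2 * y i))) = 0) :
    Fobj ℓ a b x y = (1 - ∑ i ∈ Finset.Icc 1 ℓ, (x i + y i)) ^ 2 := by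
  unfold Fobj
  simp only [Finset.sum_add_distrib, Finset.sum_sub_distrib] at h ⊢
  rw [sq]
  congr 1
  linarith

lemma aux_cs (s : Finset ℕ) (a x : ℕ → ℝ) (hx : ∀ i ∈ s, 0 < x i) :
    (∑ i ∈ s, a i) ^ 2 / (2 * ∑ i ∈ s, x i) ≤ ∑ i ∈ s, (a i) ^ 2 / (2 * x i) := by
  rw [Finset.mul_sum]
  exact Finset.sq_sum_div_le_sum_sq_div s a (fun i hi => by have := hx i hi; positivity)

/-- If `D̂` is nonempty and the late-expensive-obstacles assumption holds,
the maximum of `F` over `D̂` equals `(h*)²/2` with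
`h* = √2 (1 − (Σ a_i) f(c̃) − (Σ b_i)²/(2 (Σ a_i)(f(c̃) − 1/(2 f(c̃)))))`. -/
theorem max_over_Dhat_late_expensive (ℓ : ℕ) (hℓ : 1 ≤ ℓ) (a b : ℕ → ℝ)
    (ha : ∀ i ∈ Finset.Icc 1 ℓ, 0 < a i) (hb : ∀ i ∈ Finset.Icc 1 ℓ, 0 < b i)
    (hDhat : ∃ x y : ℕ → ℝ, memDhat ℓ a b x y)
    (hlate : LateExpensive ℓ a b) :
    IsGreatest {v : ℝ | ∃ x y : ℕ → ℝ, memDhat ℓ a b x y ∧ Fobj ℓ a b x y = v}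
      ((Real.sqrt 2 *
        (1 - (∑ i ∈ Finset.Icc 1 ℓ, a i) * fval (ctilde ℓ a b) -
          (∑ i ∈ Finset.Icc 1 ℓ, b i) ^ 2 /
            (2 * (∑ i ∈ Finset.Icc 1 ℓ, a i) *
              (fval (ctilde ℓ a b) - 1 / (2 * fval (ctilde ℓ a b)))))) ^ 2 / 2) := by
  have hne : (Finset.Icc 1 ℓ).Nonempty := ⟨1, by simp [hℓ]⟩
  have hA : 0 < ∑ i ∈ Finset.Icc 1 ℓ, a i := Finset.sum_pos ha hne
  have hB : 0 < ∑ i ∈ Finset.Icc 1 ℓ, b i := Finset.sum_pos hb hne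
  have hc : 0 < ctilde ℓ a b := by unfold ctilde; positivity
  obtain ⟨hf, hu, hfe⟩ := aux_f hc
  have hcd : ctilde ℓ a b = (∑ i ∈ Finset.Icc 1 ℓ, b i) ^ 2 /
    (2 * (∑ i ∈ Finset.Icc 1 ℓ, a i) ^ 2) := rfl
  generalize ctilde ℓ a b = c at *
  generalize fval c = f at *
  generalize hAd : (∑ i ∈ Finset.Icc 1 ℓ, a i) = A at *
  generalize hBd : (∑ i ∈ Finset.Icc 1 ℓ, b i) = B at *
  have hg : 0 < f - 1 / (2 * f) := by
    have : f - 1 / (2 * f) = (2 * f ^ 2 - 1) / (2 * f) := by field_simp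
    rw [this]; positivity
  have hTe : A * f + B ^ 2 / (2 * A * (f - 1 / (2 * f))) = A * (f + c / (f - 1 / (2 * f))) := by
    rw [hcd]
    generalize f - 1 / (2 * f) = g at *
    field_simp
  have hval : (Real.sqrt 2 * (1 - A * f - B ^ 2 / (2 * A * (f - 1 / (2 * f))))) ^ 2 / 2
      = (1 - (A * f + B ^ 2 / (2 * A * (f - 1 / (2 * f))))) ^ 2 := by
    rw [mul_pow, Real.sq_sqrt (by norm_num)]; ring
  rw [hval]
  have hlow : ∀ x y, memDhat ℓ a b x y →
      A * f + B ^ 2 / (2 * A * (f - 1 / (2 * f))) ≤ ∑ i ∈ Finset.Icc 1 ℓ, (x i + y i) := by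
    rintro x y ⟨⟨hxy, -, -⟩, h0⟩
    have hX : 0 < ∑ i ∈ Finset.Icc 1 ℓ, x i := Finset.sum_pos (fun i hi => (hxy i hi).1) hne
    have hY : 0 < ∑ i ∈ Finset.Icc 1 ℓ, y i := Finset.sum_pos (fun i hi => (hxy i hi).2) hne
    have h1 := aux_cs _ a x (fun i hi => (hxy i hi).1)
    have h2 := aux_cs _ b y (fun i hi => (hxy i hi).2)
    simp only [Finset.sum_add_distrib, Finset.sum_sub_distrib] at h0 ⊢
    rw [hAd] at h1
    rw [hBd] at h2
    generalize (∑ i ∈ Finset.Icc 1 ℓ, x i) = X at *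
    generalize (∑ i ∈ Finset.Icc 1 ℓ, y i) = Y at *
    have h3 : A ^ 2 / (2 * X) + B ^ 2 / (2 * Y) ≤ X := by linarith
    have h4 := aux_min (t := X / A) (s := Y / A) hc (by positivity) (by positivity) hf hu hfe (by
      rw [div_add_div _ _ (by positivity) (by positivity), div_le_iff₀ (by positivity)] at h3
      have e1 : 2 * c * (X / A) = B ^ 2 * X / A ^ 3 := by rw [hcd]; field_simp
      have e2 : Y / A * (2 * (X / A) ^ 2 - 1) = Y * (2 * X ^ 2 - A ^ 2) / A ^ 3 := by field_simp
      rw [e1, e2]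
      refine div_le_div_of_nonneg_right ?_ (by positivity)
      nlinarith)
    rw [hTe]
    calc A * (f + c / (f - 1 / (2 * f))) ≤ A * (X / A + Y / A) := by gcongr
      _ = X + Y := by field_simp
  constructor
  · generalize hgd : f - 1 / (2 * f) = g at *
    have hpart : ∀ m ≤ ℓ, ∑ i ∈ Finset.Icc 1 m,
        (a i * f - (a i) ^ 2 / (2 * (a i * f)) - (b i) ^ 2 / (2 * (b i * (B / (2 * A * g)))))
        = g * ((∑ i ∈ Finset.Icc 1 m, a i) - (∑ i ∈ Finset.Icc 1 m, b i) * A / B) := by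
      intro m hm
      rw [Finset.sum_mul, Finset.sum_div, ← Finset.sum_sub_distrib, Finset.mul_sum]
      refine Finset.sum_congr rfl fun i hi => ?_
      have hi' : i ∈ Finset.Icc 1 ℓ := by simp at hi ⊢; omega
      have hai := ha i hi'
      have hbi := hb i hi'
      have e1 : a i * f - (a i) ^ 2 / (2 * (a i * f)) = a i * g := by
        rw [← hgd]; field_simp
      have e2 : (b i) ^ 2 / (2 * (b i * (B / (2 * A * g)))) = g * (b i * A / B) := by
        field_simp
      rw [e1, e2]; ring
    have hsum : ∑ i ∈ Finset.Icc 1 ℓ, (a i * f + b i * (B / (2 * A * g))) =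
        A * f + B ^ 2 / (2 * A * g) := by
      rw [Finset.sum_add_distrib, ← Finset.sum_mul, ← Finset.sum_mul, hAd, hBd]; ring
    have hz := hpart ℓ le_rfl
    rw [hAd, hBd, mul_div_cancel_left₀ _ hB.ne', sub_self, mul_zero] at hz
    refine ⟨fun i => a i * f, fun i => b i * (B / (2 * A * g)), ⟨⟨?_, ?_, ?_⟩, hz⟩, ?_⟩
    · intro i hi
      have hai := ha i hi
      have hbi := hb i hi
      constructor <;> positivity
    · obtain ⟨x, y, h⟩ := hDhat
      have := hlow x y h
      have := h.1.2.1
      simp only [hsum]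
      linarith
    · intro m hm
      have hm' := Finset.mem_Icc.mp hm
      rcases eq_or_lt_of_le hm'.2 with rfl | hlt
      · exact hz.ge
      · have hp := hpart m hm'.2
        simp only [hp]
        refine mul_nonneg hg.le ?_
        have hl := hlate m hm'.1 hlt
        have hsub : ∀ i ∈ Finset.Icc 1 m, i ∈ Finset.Icc 1 ℓ := by
          intro i hi; simp at hi ⊢; omega
        have hsub2 : ∀ i ∈ Finset.Icc (m+1) ℓ, i ∈ Finset.Icc 1 ℓ := by
          intro i hi; simp at hi ⊢; omega
        have p1 : 0 < ∑ i ∈ Finset.Icc 1 m, a i :=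
          Finset.sum_pos (fun i hi => ha i (hsub i hi)) ⟨1, by simp [hm'.1]⟩
        have p2 : 0 < ∑ i ∈ Finset.Icc (m+1) ℓ, a i :=
          Finset.sum_pos (fun i hi => ha i (hsub2 i hi)) ⟨ℓ, by simp; omega⟩
        rw [div_lt_div_iff₀ p1 p2] at hl
        have split : ∀ w : ℕ → ℝ, ∑ i ∈ Finset.Icc 1 ℓ, w i =
            ∑ i ∈ Finset.Icc 1 m, w i + ∑ i ∈ Finset.Icc (m+1) ℓ, w i := by
          intro w
          rw [← Finset.sum_union]
          · congr 1; ext i; simp; omega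
          · rw [Finset.disjoint_left]; intro i; simp; omega
        have sa := split a
        have sb := split b
        rw [hAd] at sa
        rw [hBd] at sb
        rw [sub_nonneg, div_le_iff₀ hB, sa, sb]
        nlinarith
    · rw [aux_F hz]; simp only [hsum]
  · rintro v ⟨x, y, h, rfl⟩
    rw [aux_F h.2]
    have h1 := hlow x y h
    have h2 := h.1.2.1
    apply pow_le_pow_left₀ <;> linarith
end
end

section
/- Assume the late-expensive-obstacles assumption holds. Then D̂ is nonempty if and only if (Σ_{i=1}^ℓ a_i) f(c̃) + (Σ_{i=1}^ℓ b_i)²/(2(Σ_{i=1}^ℓ a_i)(f(c̃) − 1/(2f(c̃)))) ≤ 1. -/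
open Finset

noncomputable section

/-- The quadratic equation satisfied by `f²`. -/
theorem fval_spec (c : ℝ) (hc : 0 < c) :
    0 < fval c ∧ 1 / 2 < fval c ^ 2 ∧
      (fval c ^ 2 - 1 / 2) ^ 2 = c * (fval c ^ 2 + 1 / 2) := by
  have h0 : 0 ≤ c ^ 2 / 4 + c := by positivity
  have h1 := Real.sqrt_nonneg (c ^ 2 / 4 + c)
  have h2 := Real.sq_sqrt h0
  have h3 : 0 < (1 + c) / 2 + Real.sqrt (c ^ 2 / 4 + c) := by positivity
  have h4 : fval c ^ 2 = (1 + c) / 2 + Real.sqrt (c ^ 2 / 4 + c) := Real.sq_sqrt h3.le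
  refine ⟨Real.sqrt_pos.mpr h3, ?_, ?_⟩
  · rw [h4]; linarith
  · rw [h4]; nlinarith

/-- Tangent line inequality for `a² / (2 x)`. -/
theorem tangent_ineq (a x f : ℝ) (hx : 0 < x) (hf : 0 < f) :
    a / f - x / (2 * f ^ 2) ≤ a ^ 2 / (2 * x) := by
  have : a ^ 2 / (2 * x) - (a / f - x / (2 * f ^ 2)) = (a * f - x) ^ 2 / (2 * x * f ^ 2) := by
    field_simp
    ring
  have h : 0 ≤ (a * f - x) ^ 2 / (2 * x * f ^ 2) := by positivity
  linarith

/-- Under the late-expensive-obstacles assumption, `D̂` is nonempty iff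
`(Σ a_i) f(c̃) + (Σ b_i)²/(2 (Σ a_i)(f(c̃) − 1/(2 f(c̃)))) ≤ 1`. -/
theorem Dhat_nonempty_iff_late_expensive (ℓ : ℕ) (hℓ : 1 ≤ ℓ) (a b : ℕ → ℝ)
    (ha : ∀ i ∈ Finset.Icc 1 ℓ, 0 < a i) (hb : ∀ i ∈ Finset.Icc 1 ℓ, 0 < b i)
    (hlate : LateExpensive ℓ a b) :
    (∃ x y : ℕ → ℝ, memDhat ℓ a b x y) ↔
      (∑ i ∈ Finset.Icc 1 ℓ, a i) * fval (ctilde ℓ a b) +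
        (∑ i ∈ Finset.Icc 1 ℓ, b i) ^ 2 /
          (2 * (∑ i ∈ Finset.Icc 1 ℓ, a i) *
            (fval (ctilde ℓ a b) - 1 / (2 * fval (ctilde ℓ a b)))) ≤ 1 := by
  obtain ⟨A, hA⟩ : ∃ A, A = ∑ i ∈ Finset.Icc 1 ℓ, a i := ⟨_, rfl⟩
  obtain ⟨B, hB⟩ : ∃ B, B = ∑ i ∈ Finset.Icc 1 ℓ, b i := ⟨_, rfl⟩
  have hne : (Finset.Icc 1 ℓ).Nonempty := ⟨1, by simp [hℓ]⟩
  have hA0 : 0 < A := hA ▸ Finset.sum_pos ha hne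
  have hB0 : 0 < B := hB ▸ Finset.sum_pos hb hne
  have hc : ctilde ℓ a b = B ^ 2 / (2 * A ^ 2) := by rw [ctilde, hA, hB]
  have hc0 : 0 < ctilde ℓ a b := by rw [hc]; positivity
  obtain ⟨hf, hf2, hq⟩ := fval_spec _ hc0
  rw [← hA, ← hB]
  rw [hc] at hf hf2 hq
  rw [hc]
  generalize fval (B ^ 2 / (2 * A ^ 2)) = f at hf hf2 hq ⊢
  obtain ⟨g, hg⟩ : ∃ g, g = f - 1 / (2 * f) := ⟨_, rfl⟩
  have hgf : g * f = f ^ 2 - 1 / 2 := by rw [hg]; field_simp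
  have hg0 : 0 < g := by
    by_contra h
    have : g * f ≤ 0 := mul_nonpos_of_nonpos_of_nonneg (not_lt.mp h) hf.le
    linarith
  rw [← hg]
  obtain ⟨k, hk⟩ : ∃ k, k = B / (2 * A * g) := ⟨_, rfl⟩
  have hk0 : 0 < k := by rw [hk]; positivity
  have hBk : B ^ 2 / (2 * A * g) = B * k := by rw [hk]; ring
  have hkinv : 1 / (2 * k) = A * g / B := by rw [hk]; field_simp
  rw [hBk]
  constructor
  · rintro ⟨x, y, ⟨hpos, hsum, -⟩, hzero⟩
    have hterm : ∑ i ∈ Finset.Icc 1 ℓ, (x i - (a i) ^ 2 / (2 * x i) - (b i) ^ 2 / (2 * y i)) ≤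
        ∑ i ∈ Finset.Icc 1 ℓ, (x i * (1 + 1 / (2 * f ^ 2)) - a i * (1 / f)
          - b i * (1 / k) + y i * (1 / (2 * k ^ 2))) := by
      refine Finset.sum_le_sum fun i hi => ?_
      have h1 := tangent_ineq (a i) (x i) f (hpos i hi).1 hf
      have h2 := tangent_ineq (b i) (y i) k (hpos i hi).2 hk0
      simp only [div_eq_mul_inv, one_mul] at h1 h2 ⊢
      linarith
    rw [hzero] at hterm
    simp only [Finset.sum_add_distrib, Finset.sum_sub_distrib, ← Finset.sum_mul] at hterm hsum
    rw [← hA, ← hB] at hterm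
    have hlam : 1 / (2 * k ^ 2) = 1 + 1 / (2 * f ^ 2) := by
      have e1 : 1 / (2 * k ^ 2) = 2 * (A * g / B) ^ 2 := by rw [← hkinv]; field_simp
      rw [e1]
      have e2 : (g * f) ^ 2 = B ^ 2 / (2 * A ^ 2) * (f ^ 2 + 1 / 2) := by rw [hgf, hq]
      have e3 : 2 * A ^ 2 * (g * f) ^ 2 = B ^ 2 * (f ^ 2 + 1 / 2) := by rw [e2]; field_simp
      field_simp
      linarith
    have hkey : (1 + 1 / (2 * f ^ 2)) * (A * f + B * k) = A * (1 / f) + B * (1 / k) := by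
      have e1 : (1 + 1 / (2 * f ^ 2)) * (A * f) = A * f + A * (1 / (2 * f)) := by
        field_simp
      have e2 : (1 + 1 / (2 * f ^ 2)) * (B * k) = B * (1 / (2 * k)) := by
        rw [← hlam]; field_simp
      have e3 : B * (1 / (2 * k)) = A * g := by rw [hkinv]; field_simp
      have e4 : B * (1 / k) = 2 * (B * (1 / (2 * k))) := by field_simp
      have e5 : A * (1 / f) = 2 * (A * (1 / (2 * f))) := by field_simp
      have e6 : A * g = A * f - A * (1 / (2 * f)) := by rw [hg]; ring
      rw [mul_add, e1, e2, e4, e5]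
      linarith
    rw [hlam] at hterm
    have hl0 : 0 < 1 + 1 / (2 * f ^ 2) := by positivity
    refine le_trans ?_ hsum
    refine le_of_mul_le_mul_left ?_ hl0
    rw [hkey]
    linarith
  · intro h
    have hsumform : ∀ m, ∑ i ∈ Finset.Icc 1 m, (a i * g - b i * (A * g / B)) =
        g / B * ((∑ i ∈ Finset.Icc 1 m, a i) * B - (∑ i ∈ Finset.Icc 1 m, b i) * A) := by
      intro m
      rw [Finset.sum_sub_distrib, ← Finset.sum_mul, ← Finset.sum_mul]
      field_simp
    have hS : ∀ m ∈ Finset.Icc 1 ℓ,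
        ∑ i ∈ Finset.Icc 1 m, (a i * f - (a i) ^ 2 / (2 * (a i * f))
          - (b i) ^ 2 / (2 * (b i * k))) =
        g / B * ((∑ i ∈ Finset.Icc 1 m, a i) * B - (∑ i ∈ Finset.Icc 1 m, b i) * A) := by
      intro m hm
      rw [← hsumform]
      refine Finset.sum_congr rfl fun i hi => ?_
      have hi' : i ∈ Finset.Icc 1 ℓ := by
        simp only [Finset.mem_Icc] at hi hm ⊢
        omega
      have hai := ha i hi'
      have hbi := hb i hi'
      have e1 : (a i) ^ 2 / (2 * (a i * f)) = a i * (1 / (2 * f)) := by field_simp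
      have e2 : (b i) ^ 2 / (2 * (b i * k)) = b i * (1 / (2 * k)) := by field_simp
      rw [e1, e2, hkinv, hg]
      ring
    have hl : ℓ ∈ Finset.Icc 1 ℓ := by simp [hℓ]
    have hfull : ∑ i ∈ Finset.Icc 1 ℓ, (a i * f - (a i) ^ 2 / (2 * (a i * f))
          - (b i) ^ 2 / (2 * (b i * k))) = 0 := by
      rw [hS ℓ hl, ← hA, ← hB]; ring
    refine ⟨fun i => a i * f, fun i => b i * k, ⟨?_, ?_, ?_⟩, hfull⟩
    · exact fun i hi => ⟨mul_pos (ha i hi) hf, mul_pos (hb i hi) hk0⟩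
    · rw [Finset.sum_add_distrib, ← Finset.sum_mul, ← Finset.sum_mul, ← hA, ← hB]
      exact h
    · intro m hm
      rcases eq_or_lt_of_le (Finset.mem_Icc.mp hm).2 with hml | hml
      · rw [hml]; exact hfull.ge
      · have hm1 := (Finset.mem_Icc.mp hm).1
        have hL := hlate m hm1 hml
        have split : ∀ u : ℕ → ℝ, ∑ i ∈ Finset.Icc 1 ℓ, u i =
            ∑ i ∈ Finset.Icc 1 m, u i + ∑ i ∈ Finset.Icc (m + 1) ℓ, u i := by
          intro u
          rw [← Finset.sum_union]
          · refine Finset.sum_congr ?_ fun _ _ => rfl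
            ext i
            simp only [Finset.mem_union, Finset.mem_Icc]
            omega
          · rw [Finset.disjoint_left]
            intro i
            simp only [Finset.mem_Icc]
            omega
        have hp1 : 0 < ∑ i ∈ Finset.Icc 1 m, a i := by
          refine Finset.sum_pos (fun i hi => ha i ?_) ⟨1, by simp [hm1]⟩
          simp only [Finset.mem_Icc] at hi ⊢
          omega
        have hp2 : 0 < ∑ i ∈ Finset.Icc (m + 1) ℓ, a i := by
          refine Finset.sum_pos (fun i hi => ha i ?_) ⟨ℓ, by simp; omega⟩
          simp only [Finset.mem_Icc] at hi ⊢
          omega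
        rw [div_lt_div_iff₀ hp1 hp2] at hL
        have hAs := split a
        have hBs := split b
        rw [← hA] at hAs
        rw [← hB] at hBs
        rw [hS m hm]
        refine mul_nonneg (by positivity) ?_
        rw [hAs, hBs]
        nlinarith
end
end

section
/- If D̂ is nonempty, then the maximum of the objective function F over D̂ equals (h*)²/2, where h* = √2 · (1 − T*). -/
open Finset

noncomputable section

lemma hx_split (f : ℕ → ℝ) {p m q : ℕ} (h1 : p ≤ m) (h2 : m ≤ q) :
    ∑ j ∈ Finset.Icc (p + 1) q, f j =
      ∑ j ∈ Finset.Icc (p + 1) m, f j + ∑ j ∈ Finset.Icc (m + 1) q, f j := by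
  simp only [Finset.Icc_add_one_left_eq_Ioc]
  exact (Finset.sum_Ioc_consecutive f h1 h2).symm

lemma hx_pos {ℓ : ℕ} {f : ℕ → ℝ} (hf : ∀ i ∈ Finset.Icc 1 ℓ, 0 < f i) {p q : ℕ} (h1 : p < q)
    (h2 : q ≤ ℓ) : 0 < ∑ j ∈ Finset.Icc (p + 1) q, f j := by
  apply Finset.sum_pos
  · intro i hi
    rw [Finset.mem_Icc] at hi
    exact hf i (Finset.mem_Icc.2 ⟨by omega, by omega⟩)
  · exact ⟨q, Finset.mem_Icc.2 ⟨by omega, le_refl _⟩⟩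

lemma hx_med1 {a1 a2 a3 b1 b2 b3 : ℝ} (h1 : 0 < a1) (h2 : 0 < a2) (h3 : 0 < a3)
    (hA : b1 / a1 < b2 / a2) (hB : (b1 + b2) / (a1 + a2) < b3 / a3) :
    b1 / a1 < (b2 + b3) / (a2 + a3) := by
  rw [div_lt_div_iff₀ (by positivity) (by positivity)] at *
  have : b1 * a3 < b3 * a1 := by
    by_contra hc
    push Not at hc
    nlinarith [mul_le_mul_of_nonneg_right hc (add_pos h1 h2).le,
      mul_lt_mul_of_pos_right hB h1, mul_lt_mul_of_pos_right hA h3]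
  nlinarith

lemma hx_med2 {a1 a2 a3 b1 b2 b3 : ℝ} (h1 : 0 < a1) (h2 : 0 < a2) (h3 : 0 < a3)
    (hA : b2 / a2 < b3 / a3) (hB : b1 / a1 < (b2 + b3) / (a2 + a3)) :
    (b1 + b2) / (a1 + a2) < b3 / a3 := by
  rw [div_lt_div_iff₀ (by positivity) (by positivity)] at *
  have : b1 * a3 < b3 * a1 := by
    by_contra hc
    push Not at hc
    nlinarith [mul_le_mul_of_nonneg_right hc (add_pos h2 h3).le,
      mul_lt_mul_of_pos_right hB h3, mul_lt_mul_of_pos_right hA h1]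
  nlinarith

lemma hx_mono {n : ℕ} {u : ℕ → ℕ} (h : ∀ i ≤ n, u i < u (i + 1)) {i j : ℕ} (hij : i < j)
    (hj : j ≤ n + 1) : u i < u j := by
  induction j with
  | zero => omega
  | succ k ih =>
    rcases Nat.lt_succ_iff_lt_or_eq.1 hij with h' | h'
    · exact (ih h' (by omega)).trans (h k (by omega))
    · subst h'; exact h i (by omega)

lemma hx_le {n : ℕ} {u : ℕ → ℕ} (h : ∀ i ≤ n, u i < u (i + 1)) {i j : ℕ} (hij : i ≤ j)
    (hj : j ≤ n + 1) : u i ≤ u j := by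
  rcases hij.lt_or_eq with h' | h'
  · exact (hx_mono h h' hj).le
  · rw [h']

/-- In the canonical division the block ratios are nonincreasing. -/
lemma hx_canon {ℓ : ℕ} {a b : ℕ → ℝ} (ha : ∀ i ∈ Finset.Icc 1 ℓ, 0 < a i)
    {n : ℕ} {u : ℕ → ℕ} (hc : IsCanonicalDiv ℓ a b n u) {i : ℕ} (hi : i < n) :
    ratioBA a b (u (i + 1) + 1) (u (i + 2)) ≤ ratioBA a b (u i + 1) (u (i + 1)) := by
  obtain ⟨⟨hu0, hul, hus, hua⟩, hcan⟩ := hc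
  by_contra hlt
  push Not at hlt
  have hle : ∀ k ≤ n + 1, u k ≤ ℓ := fun k hk => hul ▸ hx_le hus hk le_rfl
  have key : AdmissibleDiv ℓ a b (n - 1) (fun k => if k ≤ i then u k else u (k + 1)) := by
    refine ⟨by simpa using hu0, ?_, ?_, ?_⟩
    · have e : n - 1 + 1 = n := by omega
      simp only [e]
      rw [if_neg (by omega)]; exact hul
    · intro k hk
      by_cases h1 : k + 1 ≤ i
      · simp only [h1, (by omega : k ≤ i), if_true]; exact hus k (by omega)
      · by_cases h2 : k ≤ i
        · simp only [h1, h2, if_true, if_false]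
          exact hx_mono hus (by omega) (by omega)
        · simp only [h1, h2, if_false]
          exact hus (k + 1) (by omega)
    · intro k hk m hm1 hm2
      by_cases h1 : k + 1 ≤ i
      · simp only [h1, (by omega : k ≤ i), if_true] at *; exact hua k (by omega) m hm1 hm2
      · by_cases h2 : k ≤ i
        · have hki : k = i := by omega
          subst hki
          simp only [h1, le_refl, if_true, if_false] at *
          have e1 := hus k (by omega)
          have e2 := hus (k + 1) (by omega)
          have e3 : u (k + 1 + 1) ≤ ℓ := hle (k + 2) (by omega)
          rcases lt_trichotomy m (u (k + 1)) with h | h | h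
          · have hA := hua k (by omega) m hm1 h
            unfold ratioBA at *
            rw [hx_split b (m := m) hm1.le h.le, hx_split a (m := m) hm1.le h.le] at hlt
            rw [hx_split b (m := u (k + 1)) h.le e2.le, hx_split a (m := u (k + 1)) h.le e2.le]
            exact hx_med1 (hx_pos ha hm1 (by omega)) (hx_pos ha h (by omega))
              (hx_pos ha e2 (by omega)) hA hlt
          · subst h; exact hlt
          · have hA := hua (k + 1) (by omega) m h hm2
            unfold ratioBA at *
            rw [hx_split b (m := m) h.le hm2.le, hx_split a (m := m) h.le hm2.le] at hlt
            rw [hx_split b (m := u (k + 1)) e1.le h.le, hx_split a (m := u (k + 1)) e1.le h.le]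
            exact hx_med2 (hx_pos ha e1 (by omega)) (hx_pos ha h (by omega))
              (hx_pos ha hm2 (by omega)) hA hlt
        · simp only [h1, h2, if_false] at *
          exact hua (k + 1) (by omega) m hm1 hm2
  obtain ⟨k, hk, hk2⟩ := (hcan (u (i + 1))).1 ⟨i + 1, by omega, rfl⟩ _ _ key
  by_cases h : k ≤ i
  · simp only [h, if_true] at hk2
    have := hx_mono hus (i := k) (j := i + 1) (by omega) (by omega)
    omega
  · simp only [h, if_false] at hk2
    have := hx_mono hus (i := i + 1) (j := k + 1) (by omega) (by omega)
    omega

lemma hx_fval {c : ℝ} (hc : 0 < c) :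
    0 < fval c ∧ 1 < 2 * fval c ^ 2 ∧ (2 * fval c ^ 2 - 1) ^ 2 = 2 * c * (2 * fval c ^ 2 + 1) := by
  have hq : (Real.sqrt (c ^ 2 / 4 + c)) ^ 2 = c ^ 2 / 4 + c := Real.sq_sqrt (by positivity)
  have hq0 := Real.sqrt_nonneg (c ^ 2 / 4 + c)
  have ht : fval c ^ 2 = (1 + c) / 2 + Real.sqrt (c ^ 2 / 4 + c) := Real.sq_sqrt (by positivity)
  refine ⟨Real.sqrt_pos.2 (by positivity), by linarith, ?_⟩
  rw [ht]
  linear_combination 4 * hq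

lemma hx_fval_mono {c d : ℝ} (hc : 0 < c) (h : c ≤ d) : fval c ≤ fval d := by
  unfold fval
  gcongr

/-- Tangent (AM-GM) inequality for one obstacle. -/
lemma hx_tangent {x y a b t s μ : ℝ} (hx : 0 < x) (hy : 0 < y) (ht : 0 < t) (hs : 0 < s)
    (hst : s ^ 2 * (2 * t ^ 2 + 1) = t ^ 2) (hμ : μ = 2 * s ^ 2) :
    a * t + b * s - μ * (a * (t - 1 / (2 * t)) - b / (2 * s)) +
      μ * (x - a ^ 2 / (2 * x) - b ^ 2 / (2 * y)) ≤ x + y := by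
  subst hμ
  have hs2 : s ^ 2 = t ^ 2 / (2 * t ^ 2 + 1) := by
    rw [eq_div_iff (by positivity)]; exact hst
  have key : x + y - (a * t + b * s - 2 * s ^ 2 * (a * (t - 1 / (2 * t)) - b / (2 * s)) +
      2 * s ^ 2 * (x - a ^ 2 / (2 * x) - b ^ 2 / (2 * y))) =
      (x - a * t) ^ 2 / (x * (2 * t ^ 2 + 1)) + (y - b * s) ^ 2 / y := by
    have e1 : (y - b * s) ^ 2 / y = y - 2 * b * s + s ^ 2 * b ^ 2 / y := by field_simp; ring
    have e2 : 2 * s ^ 2 * (a * (t - 1 / (2 * t)) - b / (2 * s)) =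
      2 * s ^ 2 * (a * (t - 1 / (2 * t))) - b * s := by field_simp
    rw [e1, e2, hs2]
    field_simp
    ring
  have : 0 ≤ (x - a * t) ^ 2 / (x * (2 * t ^ 2 + 1)) + (y - b * s) ^ 2 / y := by positivity
  linarith

lemma hx_abel {ℓ : ℕ} {μ g : ℕ → ℝ} (hμ : ∀ j, 1 ≤ j → j ≤ ℓ → 0 ≤ μ j)
    (hanti : ∀ j, 1 ≤ j → j + 1 ≤ ℓ → μ (j + 1) ≤ μ j)
    (hg : ∀ m ∈ Finset.Icc 1 ℓ, 0 ≤ ∑ i ∈ Finset.Icc 1 m, g i) (hℓ : 1 ≤ ℓ) :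
    0 ≤ ∑ i ∈ Finset.Icc 1 ℓ, μ i * g i := by
  have key : ∀ m, 1 ≤ m → m ≤ ℓ →
      μ m * ∑ i ∈ Finset.Icc 1 m, g i ≤ ∑ i ∈ Finset.Icc 1 m, μ i * g i := by
    intro m hm
    induction m, hm using Nat.le_induction with
    | base => intro _; simp
    | succ k hk ih =>
      intro hkl
      rw [Finset.sum_Icc_succ_top (by omega), Finset.sum_Icc_succ_top (by omega)]
      have h1 := ih (by omega)
      have h2 := hanti k hk hkl
      have h3 := hg k (Finset.mem_Icc.2 ⟨hk, by omega⟩)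
      nlinarith [mul_le_mul_of_nonneg_right h2 h3]
  exact le_trans (mul_nonneg (hμ ℓ hℓ le_rfl) (hg ℓ (Finset.mem_Icc.2 ⟨hℓ, le_rfl⟩)))
    (key ℓ hℓ le_rfl)

lemma hx_blocks (f : ℕ → ℝ) {n : ℕ} {u : ℕ → ℕ} (hu0 : u 0 = 0)
    (h : ∀ i ≤ n, u i < u (i + 1)) {k : ℕ} (hk : k ≤ n + 1) :
    ∑ j ∈ Finset.Icc 1 (u k), f j =
      ∑ i ∈ Finset.range k, ∑ j ∈ Finset.Icc (u i + 1) (u (i + 1)), f j := by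
  induction k with
  | zero => simp [hu0]
  | succ k ih =>
    rw [Finset.sum_range_succ, ← ih (by omega)]
    exact hx_split f (p := 0) (Nat.zero_le _) (h k (by omega)).le

/-- Index of the block containing `j`. -/
def hxBlk (n : ℕ) (u : ℕ → ℕ) (j : ℕ) : ℕ := Nat.findGreatest (fun k => u k < j) n

lemma hx_blk {n : ℕ} {u : ℕ → ℕ} (h : ∀ i ≤ n, u i < u (i + 1)) {i j : ℕ} (hi : i ≤ n)
    (h1 : u i + 1 ≤ j) (h2 : j ≤ u (i + 1)) : hxBlk n u j = i := by
  unfold hxBlk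
  rw [Nat.findGreatest_eq_iff]
  refine ⟨hi, fun _ => by omega, fun k hk hkn => ?_⟩
  have := hx_le h (i := i + 1) (j := k) (by omega) (by omega)
  omega

lemma hx_exblk {n : ℕ} {u : ℕ → ℕ} (hu0 : u 0 = 0) {j : ℕ}
    (h1 : 1 ≤ j) (h2 : j ≤ u (n + 1)) : ∃ i ≤ n, u i + 1 ≤ j ∧ j ≤ u (i + 1) := by
  induction n with
  | zero => exact ⟨0, le_rfl, by omega, h2⟩
  | succ n ih =>
    by_cases h : j ≤ u (n + 1)
    · obtain ⟨i, hi, h'⟩ := ih h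
      exact ⟨i, by omega, h'⟩
    · exact ⟨n + 1, le_rfl, by omega, h2⟩

/-- If `D̂` is nonempty, the maximum of `F` over `D̂` equals `(h*)²/2` with
`h* = √2 (1 − T*)`, where `T*` is the total optimal time of the canonical admissible
division into blocks. -/
theorem max_over_Dhat_general (ℓ : ℕ) (hℓ : 1 ≤ ℓ) (a b : ℕ → ℝ)
    (ha : ∀ i ∈ Finset.Icc 1 ℓ, 0 < a i) (hb : ∀ i ∈ Finset.Icc 1 ℓ, 0 < b i)
    (nstar : ℕ) (ustar : ℕ → ℕ) (hcanon : IsCanonicalDiv ℓ a b nstar ustar)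
    (hDhat : ∃ x y : ℕ → ℝ, memDhat ℓ a b x y) :
    IsGreatest {v : ℝ | ∃ x y : ℕ → ℝ, memDhat ℓ a b x y ∧ Fobj ℓ a b x y = v}
      ((Real.sqrt 2 * (1 - Tstar a b nstar ustar)) ^ 2 / 2) := by
  obtain ⟨⟨hu0, hul, hus, hua⟩, -⟩ := id hcanon
  have hle : ∀ k ≤ nstar + 1, ustar k ≤ ℓ := fun k hk => hul ▸ hx_le hus hk le_rfl
  set A : ℕ → ℝ := fun i => ∑ j ∈ Finset.Icc (ustar i + 1) (ustar (i + 1)), a j with hA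
  set B : ℕ → ℝ := fun i => ∑ j ∈ Finset.Icc (ustar i + 1) (ustar (i + 1)), b j with hB
  have hApos : ∀ i ≤ nstar, 0 < A i := fun i hi => hx_pos ha (hus i hi) (hle _ (by omega))
  have hBpos : ∀ i ≤ nstar, 0 < B i := fun i hi => hx_pos hb (hus i hi) (hle _ (by omega))
  set c : ℕ → ℝ := fun i => B i ^ 2 / (2 * A i ^ 2) with hc
  have hcpos : ∀ i ≤ nstar, 0 < c i := fun i hi => by
    have := hApos i hi
    have := hBpos i hi
    simp only [hc]; positivity
  set t : ℕ → ℝ := fun i => fval (c i) with ht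
  set s : ℕ → ℝ := fun i => B i / (2 * A i * (t i - 1 / (2 * t i))) with hs
  have htpos : ∀ i ≤ nstar, 0 < t i := fun i hi => (hx_fval (hcpos i hi)).1
  have hkpos : ∀ i ≤ nstar, 0 < t i - 1 / (2 * t i) := fun i hi => by
    obtain ⟨h1, h2, -⟩ := hx_fval (hcpos i hi)
    change 0 < t i at h1
    change 1 < 2 * t i ^ 2 at h2
    rw [sub_pos, div_lt_iff₀ (by positivity)]
    nlinarith
  have hspos : ∀ i ≤ nstar, 0 < s i := fun i hi => by
    have := hApos i hi
    have := hBpos i hi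
    have := hkpos i hi
    simp only [hs]; positivity
  have hst : ∀ i ≤ nstar, s i ^ 2 * (2 * t i ^ 2 + 1) = t i ^ 2 := fun i hi => by
    have e1 := hApos i hi
    have e2 := hBpos i hi
    obtain ⟨h1, h2, h3⟩ := hx_fval (hcpos i hi)
    change 0 < t i at h1
    change 1 < 2 * t i ^ 2 at h2
    change (2 * t i ^ 2 - 1) ^ 2 = 2 * c i * (2 * t i ^ 2 + 1) at h3
    have h4 : 2 * t i ^ 2 - 1 ≠ 0 := by linarith
    have h5 : s i = B i * t i / (A i * (2 * t i ^ 2 - 1)) := by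
      simp only [hs]
      have : t i - 1 / (2 * t i) = (2 * t i ^ 2 - 1) / (2 * t i) := by field_simp
      rw [this]; field_simp
    have h6 : 2 * c i * A i ^ 2 = B i ^ 2 := by simp only [hc]; field_simp
    rw [h5, div_pow, mul_pow, mul_pow, ← h6, div_mul_eq_mul_div, div_eq_iff (by positivity)]
    linear_combination (-(A i ^ 2 * t i ^ 2)) * h3
  have hbs : ∀ i ≤ nstar, A i * (t i - 1 / (2 * t i)) - B i / (2 * s i) = 0 := fun i hi => by
    have e1 := hApos i hi
    have e2 := hBpos i hi
    have e3 := hkpos i hi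
    simp only [hs]
    generalize t i - 1 / (2 * t i) = k at *
    field_simp
    ring
  set β : ℕ → ℕ := hxBlk nstar ustar with hβ
  have hβeq : ∀ i ≤ nstar, ∀ j ∈ Finset.Icc (ustar i + 1) (ustar (i + 1)), β j = i := by
    intro i hi j hj
    rw [Finset.mem_Icc] at hj
    exact hx_blk hus hi hj.1 hj.2
  have hex : ∀ j, 1 ≤ j → j ≤ ℓ → ∃ i ≤ nstar, ustar i + 1 ≤ j ∧ j ≤ ustar (i + 1) :=
    fun j h1 h2 => hx_exblk hu0 h1 (by omega)
  have hβle : ∀ j, β j ≤ nstar := fun j => Nat.findGreatest_le _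
  -- sums over blocks
  have hblk : ∀ (f : ℕ → ℝ), ∀ k ≤ nstar + 1, ∑ j ∈ Finset.Icc 1 (ustar k), f j =
      ∑ i ∈ Finset.range k, ∑ j ∈ Finset.Icc (ustar i + 1) (ustar (i + 1)), f j :=
    fun f k hk => hx_blocks f hu0 hus hk
  set G : ℕ → ℝ := fun j => a j * (t (β j) - 1 / (2 * t (β j))) - b j / (2 * s (β j)) with hG
  have hGpart : ∀ i ≤ nstar, ∀ m ≤ ustar (i + 1), ∑ j ∈ Finset.Icc (ustar i + 1) m, G j =
      (∑ j ∈ Finset.Icc (ustar i + 1) m, a j) * (t i - 1 / (2 * t i)) -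
        (∑ j ∈ Finset.Icc (ustar i + 1) m, b j) / (2 * s i) := by
    intro i hi m hm
    rw [Finset.sum_mul, Finset.sum_div, ← Finset.sum_sub_distrib]
    refine Finset.sum_congr rfl fun j hj => ?_
    rw [Finset.mem_Icc] at hj
    simp only [hG]
    rw [hβeq i hi j (Finset.mem_Icc.2 ⟨hj.1, by omega⟩)]
  have hGblk : ∀ i ≤ nstar, ∑ j ∈ Finset.Icc (ustar i + 1) (ustar (i + 1)), G j = 0 := by
    intro i hi
    rw [hGpart i hi _ le_rfl]
    exact hbs i hi
  have hGu : ∀ k ≤ nstar + 1, ∑ j ∈ Finset.Icc 1 (ustar k), G j = 0 := by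
    intro k hk
    rw [hblk G k hk]
    refine Finset.sum_eq_zero fun i hi => hGblk i ?_
    rw [Finset.mem_range] at hi; omega
  have hGm : ∀ m ∈ Finset.Icc 1 ℓ, 0 ≤ ∑ j ∈ Finset.Icc 1 m, G j := by
    intro m hm
    rw [Finset.mem_Icc] at hm
    obtain ⟨i, hi, h1, h2⟩ := hex m hm.1 hm.2
    have h0 := hx_split G (p := 0) (m := ustar i) (q := m) (Nat.zero_le _) (by omega)
    rw [zero_add, hGu i (by omega), zero_add] at h0
    rw [h0]
    rcases h2.lt_or_eq with h2 | h2
    · rw [hGpart i hi m h2.le]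
      have hr := hua i hi m (by omega) h2
      unfold ratioBA at hr
      have p1 := hx_pos ha (p := ustar i) (q := m) (by omega) hm.2
      have p2 := hx_pos ha h2 (hle _ (by omega))
      rw [div_lt_div_iff₀ p1 p2] at hr
      have qa : A i = _ := hx_split a (p := ustar i) (m := m) (by omega) h2.le
      have qb : B i = _ := hx_split b (p := ustar i) (m := m) (by omega) h2.le
      have hbsi := hbs i hi
      have hAi := hApos i hi
      have hsi := hspos i hi
      generalize (∑ j ∈ Finset.Icc (ustar i + 1) m, a j) = a1 at *
      generalize (∑ j ∈ Finset.Icc (m + 1) (ustar (i + 1)), a j) = a2 at *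
      generalize (∑ j ∈ Finset.Icc (ustar i + 1) m, b j) = b1 at *
      generalize (∑ j ∈ Finset.Icc (m + 1) (ustar (i + 1)), b j) = b2 at *
      have hk : t i - 1 / (2 * t i) = B i / (2 * s i) / A i := by
        rw [eq_div_iff hAi.ne']; linarith
      rw [hk, sub_nonneg, div_le_iff₀ (by positivity)]
      have : a1 * (B i / (2 * s i) / A i) * (2 * s i) = a1 * B i / A i := by field_simp
      rw [this, le_div_iff₀ hAi, qa, qb]
      nlinarith
    · subst h2
      exact (hGblk i hi).ge
  have hT : ∑ j ∈ Finset.Icc 1 ℓ, (a j * t (β j) + b j * s (β j)) = Tstar a b nstar ustar := by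
    rw [← hul, hblk _ _ le_rfl]
    refine Finset.sum_congr rfl fun i hi => ?_
    have hi' : i ≤ nstar := by rw [Finset.mem_range] at hi; omega
    have : ∑ j ∈ Finset.Icc (ustar i + 1) (ustar (i + 1)), (a j * t (β j) + b j * s (β j)) =
        A i * t i + B i * s i := by
      simp only [hA, hB]
      rw [Finset.sum_mul, Finset.sum_mul, ← Finset.sum_add_distrib]
      refine Finset.sum_congr rfl fun j hj => ?_
      rw [hβeq i hi' j hj]
    rw [this]
    change _ = A i * t i + B i ^ 2 / (2 * A i * (t i - 1 / (2 * t i)))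
    have : B i * s i = B i ^ 2 / (2 * A i * (t i - 1 / (2 * t i))) := by
      simp only [hs]; ring
    rw [this]
  -- multipliers
  set μ : ℕ → ℝ := fun j => 2 * s (β j) ^ 2 with hμ
  have htanti : ∀ i < nstar, t (i + 1) ≤ t i := by
    intro i hi
    apply hx_fval_mono (hcpos _ (by omega))
    have hr := hx_canon ha hcanon hi
    have hr' : B (i + 1) / A (i + 1) ≤ B i / A i := hr
    have e1 := hApos (i + 1) (by omega)
    have e2 := hBpos (i + 1) (by omega)
    have h0 : 0 ≤ B (i + 1) / A (i + 1) := by positivity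
    have h2 := pow_le_pow_left₀ h0 hr' 2
    have : ∀ k, c k = (B k / A k) ^ 2 / 2 := fun k => by
      simp only [hc]; rw [div_pow, div_div, mul_comm]
    rw [this, this]; linarith
  have hsanti : ∀ i < nstar, s (i + 1) ^ 2 ≤ s i ^ 2 := by
    intro i hi
    have h1 := hst i (by omega)
    have h2 := hst (i + 1) (by omega)
    have h3 := htanti i hi
    have h4 := htpos (i + 1) (by omega)
    have h5 : t (i + 1) ^ 2 ≤ t i ^ 2 := pow_le_pow_left₀ h4.le h3 2
    have g1 : s i ^ 2 = t i ^ 2 / (2 * t i ^ 2 + 1) := by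
      rw [eq_div_iff (by positivity)]; exact h1
    have g2 : s (i + 1) ^ 2 = t (i + 1) ^ 2 / (2 * t (i + 1) ^ 2 + 1) := by
      rw [eq_div_iff (by positivity)]; exact h2
    rw [g1, g2, div_le_div_iff₀ (by positivity) (by positivity)]
    nlinarith
  have hμanti : ∀ j, 1 ≤ j → j + 1 ≤ ℓ → μ (j + 1) ≤ μ j := by
    intro j h1 h2
    obtain ⟨i, hi, g1, g2⟩ := hex j h1 (by omega)
    simp only [hμ]
    rw [hβeq i hi j (Finset.mem_Icc.2 ⟨g1, g2⟩)]
    rcases g2.lt_or_eq with g | g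
    · rw [hβeq i hi (j + 1) (Finset.mem_Icc.2 ⟨by omega, by omega⟩)]
    · have hin : i < nstar := by
        rcases hi.lt_or_eq with h | h
        · exact h
        · subst h; omega
      have := hus (i + 1) (by omega)
      rw [hβeq (i + 1) (by omega) (j + 1) (Finset.mem_Icc.2 ⟨by omega, by omega⟩)]
      have := hsanti i hin
      linarith
  have hμG : ∑ j ∈ Finset.Icc 1 ℓ, μ j * G j = 0 := by
    rw [← hul, hblk _ _ le_rfl]
    refine Finset.sum_eq_zero fun i hi => ?_
    have hi' : i ≤ nstar := by rw [Finset.mem_range] at hi; omega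
    have : ∑ j ∈ Finset.Icc (ustar i + 1) (ustar (i + 1)), μ j * G j =
        2 * s i ^ 2 * ∑ j ∈ Finset.Icc (ustar i + 1) (ustar (i + 1)), G j := by
      rw [Finset.mul_sum]
      refine Finset.sum_congr rfl fun j hj => ?_
      simp only [hμ]
      rw [hβeq i hi' j hj]
    rw [this, hGblk i hi', mul_zero]
  -- lower bound
  have hlow : ∀ x y : ℕ → ℝ, memDhat ℓ a b x y →
      Tstar a b nstar ustar ≤ ∑ i ∈ Finset.Icc 1 ℓ, (x i + y i) := by
    rintro x y ⟨⟨hp, -, hg⟩, -⟩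
    have h1 : 0 ≤ ∑ j ∈ Finset.Icc 1 ℓ,
        μ j * (x j - (a j) ^ 2 / (2 * x j) - (b j) ^ 2 / (2 * y j)) :=
      hx_abel (fun j _ _ => by simp only [hμ]; positivity) hμanti hg hℓ
    have h2 : ∑ j ∈ Finset.Icc 1 ℓ, (a j * t (β j) + b j * s (β j) - μ j * G j +
        μ j * (x j - (a j) ^ 2 / (2 * x j) - (b j) ^ 2 / (2 * y j))) ≤
        ∑ i ∈ Finset.Icc 1 ℓ, (x i + y i) := by
      refine Finset.sum_le_sum fun j hj => ?_
      exact hx_tangent (hp j hj).1 (hp j hj).2 (htpos _ (hβle j)) (hspos _ (hβle j))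
        (hst _ (hβle j)) rfl
    rw [Finset.sum_add_distrib, Finset.sum_sub_distrib, hT, hμG] at h2
    linarith
  have hF : ∀ x y : ℕ → ℝ, memDhat ℓ a b x y →
      Fobj ℓ a b x y = (1 - ∑ i ∈ Finset.Icc 1 ℓ, (x i + y i)) ^ 2 := by
    rintro x y ⟨-, h0⟩
    unfold Fobj
    have : ∑ i ∈ Finset.Icc 1 ℓ, (y i + (a i) ^ 2 / (2 * x i) + (b i) ^ 2 / (2 * y i)) =
        ∑ i ∈ Finset.Icc 1 ℓ, (x i + y i) := by
      rw [← sub_eq_zero, ← Finset.sum_sub_distrib, ← neg_eq_zero, ← Finset.sum_neg_distrib, ← h0]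
      exact Finset.sum_congr rfl fun i _ => by ring
    rw [this]; ring
  have hval : (Real.sqrt 2 * (1 - Tstar a b nstar ustar)) ^ 2 / 2 =
      (1 - Tstar a b nstar ustar) ^ 2 := by
    rw [mul_pow, Real.sq_sqrt (by norm_num)]; ring
  rw [hval]
  have hT1 : Tstar a b nstar ustar ≤ 1 := by
    obtain ⟨x, y, h⟩ := hDhat
    exact (hlow x y h).trans h.1.2.1
  constructor
  · have hgG : ∀ m ≤ ℓ, ∑ j ∈ Finset.Icc 1 m, (a j * t (β j) - (a j) ^ 2 / (2 * (a j * t (β j))) -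
        (b j) ^ 2 / (2 * (b j * s (β j)))) = ∑ j ∈ Finset.Icc 1 m, G j := by
      intro m hm
      refine Finset.sum_congr rfl fun j hj => ?_
      rw [Finset.mem_Icc] at hj
      have e1 := ha j (Finset.mem_Icc.2 ⟨hj.1, by omega⟩)
      have e2 := hb j (Finset.mem_Icc.2 ⟨hj.1, by omega⟩)
      have e3 := htpos _ (hβle j)
      have e4 := hspos _ (hβle j)
      simp only [hG]
      generalize t (β j) = t' at *
      generalize s (β j) = s' at *
      field_simp
    have hmem : memDhat ℓ a b (fun j => a j * t (β j)) (fun j => b j * s (β j)) := by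
      refine ⟨⟨fun i hi => ⟨mul_pos (ha i hi) (htpos _ (hβle i)),
        mul_pos (hb i hi) (hspos _ (hβle i))⟩, by rw [hT]; exact hT1, ?_⟩, ?_⟩
      · intro m hm
        rw [hgG m (Finset.mem_Icc.1 hm).2]
        exact hGm m hm
      · rw [hgG ℓ le_rfl, ← hul]
        exact hGu _ le_rfl
    refine ⟨_, _, hmem, ?_⟩
    rw [hF _ _ hmem, hT]
  · rintro v ⟨x, y, h, rfl⟩
    rw [hF x y h]
    have h1 := hlow x y h
    have h2 := h.1.2.1
    exact pow_le_pow_left₀ (by linarith) (by linarith) 2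
end
end

section
/- Let 0 = u_0 < u_1 < … < u_{n_1+1} = ℓ and 0 = v_0 < v_1 < … < v_{n_2+1} = ℓ be two admissible divisions into blocks. Let 0 = w_0 < w_1 < … < w_{n_3+1} = ℓ be the increasing enumeration of the intersection {u_0,…,u_{n_1+1}} ∩ {v_0,…,v_{n_2+1}}. Then (w_0,…,w_{n_3+1}) is an admissible division into blocks. -/
open Finset

noncomputable section

theorem aux_mono (n : ℕ) (u : ℕ → ℕ) (h : ∀ i ≤ n, u i < u (i + 1)) (i j : ℕ) (hij : i ≤ j)
    (hj : j ≤ n + 1) : u i ≤ u j := by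
  induction j, hij using Nat.le_induction with
  | base => exact le_rfl
  | succ k hk ih => exact (ih (by omega)).trans (h k (by omega)).le

theorem aux_find (n : ℕ) (u : ℕ → ℕ) (m : ℕ) (h0 : u 0 < m) (hn : m < u (n + 1))
    (hm : ∀ i ≤ n + 1, u i ≠ m) : ∃ i ≤ n, u i < m ∧ m < u (i + 1) := by
  by_contra hcon
  push Not at hcon
  have key : ∀ i, i ≤ n + 1 → u i < m := by
    intro i
    induction i with
    | zero => intro _; exact h0
    | succ k ih =>
      intro hk
      have h1 := hcon k (by omega) (ih (by omega))
      have h2 := hm (k + 1) hk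
      omega
  have := key (n + 1) le_rfl
  omega

theorem aux_sum (f : ℕ → ℝ) (p q : ℕ) (h : p ≤ q) :
    ∑ j ∈ Finset.Icc (p + 1) q, f j
      = ∑ j ∈ Finset.Icc 1 q, f j - ∑ j ∈ Finset.Icc 1 p, f j := by
  induction q, h using Nat.le_induction with
  | base => simp
  | succ k hk ih =>
    rw [Finset.sum_Icc_succ_top (by omega), Finset.sum_Icc_succ_top (by omega), ih]
    ring

theorem aux_pos (ℓ : ℕ) (a : ℕ → ℝ) (ha : ∀ i ∈ Finset.Icc 1 ℓ, 0 < a i) (p q : ℕ)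
    (h : p < q) (hq : q ≤ ℓ) :
    0 < ∑ j ∈ Finset.Icc 1 q, a j - ∑ j ∈ Finset.Icc 1 p, a j := by
  rw [← aux_sum a p q h.le]
  apply Finset.sum_pos
  · intro i hi
    apply ha
    simp only [Finset.mem_Icc] at *
    omega
  · exact ⟨q, by simp only [Finset.mem_Icc]; omega⟩

theorem aux_ratio (ℓ : ℕ) (a b : ℕ → ℝ) (ha : ∀ i ∈ Finset.Icc 1 ℓ, 0 < a i) (p m q : ℕ)
    (h : p < m) (h' : m < q) (hq : q ≤ ℓ) :
    ratioBA a b (p + 1) m < ratioBA a b (m + 1) q ↔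
    (∑ j ∈ Finset.Icc 1 m, b j - ∑ j ∈ Finset.Icc 1 p, b j) *
      (∑ j ∈ Finset.Icc 1 q, a j - ∑ j ∈ Finset.Icc 1 m, a j) <
    (∑ j ∈ Finset.Icc 1 q, b j - ∑ j ∈ Finset.Icc 1 m, b j) *
      (∑ j ∈ Finset.Icc 1 m, a j - ∑ j ∈ Finset.Icc 1 p, a j) := by
  unfold ratioBA
  rw [aux_sum _ _ _ h.le, aux_sum _ _ _ h.le, aux_sum _ _ _ h'.le, aux_sum _ _ _ h'.le]
  exact div_lt_div_iff₀ (aux_pos ℓ a ha p m h (by omega)) (aux_pos ℓ a ha m q h' hq)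

/-- A point of `(s, t)` not in the division cannot be a maximum of `D B - E A` on `[s, t]`. -/
theorem aux_max (ℓ : ℕ) (a b : ℕ → ℝ) (ha : ∀ i ∈ Finset.Icc 1 ℓ, 0 < a i)
    (n : ℕ) (u : ℕ → ℕ) (hu : AdmissibleDiv ℓ a b n u) (s t m : ℕ) (hsm : s < m) (hmt : m < t)
    (hs : ∃ i ≤ n + 1, u i = s) (ht : ∃ i ≤ n + 1, u i = t) (hm : ¬ ∃ i ≤ n + 1, u i = m)
    (D E : ℝ) (hD : 0 < D)
    (hmax : ∀ k, s ≤ k → k ≤ t →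
      D * (∑ j ∈ Finset.Icc 1 k, b j) - E * (∑ j ∈ Finset.Icc 1 k, a j) ≤
      D * (∑ j ∈ Finset.Icc 1 m, b j) - E * (∑ j ∈ Finset.Icc 1 m, a j)) : False := by
  obtain ⟨h0, hl, hmono, hadm⟩ := hu
  obtain ⟨i1, hi1, rfl⟩ := hs
  obtain ⟨i2, hi2, rfl⟩ := ht
  have M := aux_mono n u hmono
  have e2 := M i2 (n + 1) hi2 le_rfl
  obtain ⟨i, hi, hp, hq⟩ := aux_find n u m (by omega) (by omega) (fun i hi h => hm ⟨i, hi, h⟩)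
  have hsp : u i1 ≤ u i := by
    by_contra hc
    rcases le_or_gt i1 i with h | h
    · have := M i1 i h (by omega); omega
    · have := M (i + 1) i1 h hi1; omega
  have hqt : u (i + 1) ≤ u i2 := by
    by_contra hc
    rcases le_or_gt i2 i with h | h
    · have := M i2 i h (by omega); omega
    · have := M (i + 1) i2 h hi2; omega
  have h1 := (aux_ratio ℓ a b ha (u i) m (u (i + 1)) hp hq (by omega)).1 (hadm i hi m hp hq)
  have h2 := hmax (u i) hsp (by omega)
  have h3 := hmax (u (i + 1)) (by omega) hqt
  have p1 := aux_pos ℓ a ha (u i) m hp (by omega)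
  have p2 := aux_pos ℓ a ha m (u (i + 1)) hq (by omega)
  have x1 := mul_lt_mul_of_pos_left h1 hD
  have x2 := mul_le_mul_of_nonneg_right h2 p2.le
  have x3 := mul_le_mul_of_nonneg_right h3 p1.le
  nlinarith

/-- The intersection of two admissible divisions into blocks is admissible. -/
theorem intersection_admissible (ℓ : ℕ) (hℓ : 1 ≤ ℓ) (a b : ℕ → ℝ)
    (ha : ∀ i ∈ Finset.Icc 1 ℓ, 0 < a i) (hb : ∀ i ∈ Finset.Icc 1 ℓ, 0 < b i)
    (n1 n2 n3 : ℕ) (u v w : ℕ → ℕ)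
    (hu : AdmissibleDiv ℓ a b n1 u) (hv : AdmissibleDiv ℓ a b n2 v)
    (hw0 : w 0 = 0) (hwl : w (n3 + 1) = ℓ) (hwmono : ∀ i ≤ n3, w i < w (i + 1))
    (hwset : ∀ k : ℕ, (∃ i ≤ n3 + 1, w i = k) ↔
      ((∃ i ≤ n1 + 1, u i = k) ∧ (∃ j ≤ n2 + 1, v j = k))) :
    AdmissibleDiv ℓ a b n3 w := by
  refine ⟨hw0, hwl, hwmono, ?_⟩
  intro i hi m hm1 hm2
  have M := aux_mono n3 w hwmono
  have hle := M (i + 1) (n3 + 1) (by omega) le_rfl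
  obtain ⟨hsu, hsv⟩ := (hwset (w i)).1 ⟨i, by omega, rfl⟩
  obtain ⟨htu, htv⟩ := (hwset (w (i + 1))).1 ⟨i + 1, by omega, rfl⟩
  have hnot : ∀ k, w i < k → k < w (i + 1) → ¬ ∃ j ≤ n3 + 1, w j = k := by
    rintro k hk1 hk2 ⟨j, hj, rfl⟩
    rcases le_or_gt j i with h | h
    · have := M j i h (by omega); omega
    · have := M (i + 1) j h hj; omega
  rw [aux_ratio ℓ a b ha (w i) m (w (i + 1)) hm1 hm2 (by omega)]
  generalize w i = s at *
  generalize w (i + 1) = t at *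
  have hD := aux_pos ℓ a ha s t (by omega) (by omega)
  obtain ⟨D, hDdef⟩ : ∃ D, D = ∑ j ∈ Finset.Icc 1 t, a j - ∑ j ∈ Finset.Icc 1 s, a j := ⟨_, rfl⟩
  obtain ⟨E, hEdef⟩ : ∃ E, E = ∑ j ∈ Finset.Icc 1 t, b j - ∑ j ∈ Finset.Icc 1 s, b j := ⟨_, rfl⟩
  rw [← hDdef] at hD
  obtain ⟨g, hg⟩ : ∃ g : ℕ → ℝ, ∀ k, g k =
    D * (∑ j ∈ Finset.Icc 1 k, b j) - E * (∑ j ∈ Finset.Icc 1 k, a j) := ⟨_, fun _ => rfl⟩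
  have hst : g s = g t := by
    rw [hg, hg, hDdef, hEdef]; ring
  by_contra hcon
  have hgm : g s ≤ g m := by
    rw [hg, hg, hDdef, hEdef]
    nlinarith
  obtain ⟨k, hk, hkmax⟩ := Finset.exists_max_image (Finset.Ioo s t) g
    ⟨m, Finset.mem_Ioo.2 ⟨hm1, hm2⟩⟩
  rw [Finset.mem_Ioo] at hk
  have hgk := hkmax m (Finset.mem_Ioo.2 ⟨hm1, hm2⟩)
  have hmax : ∀ k', s ≤ k' → k' ≤ t → g k' ≤ g k := by
    intro k' h1 h2
    rcases h1.eq_or_lt with h | h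
    · rw [← h]; linarith
    rcases h2.eq_or_lt with h' | h'
    · rw [h']; linarith
    exact hkmax k' (Finset.mem_Ioo.2 ⟨h, h'⟩)
  simp only [hg] at hmax
  have hk3 := hnot k hk.1 hk.2
  rw [hwset, not_and_or] at hk3
  rcases hk3 with h | h
  · exact aux_max ℓ a b ha n1 u hu s t k hk.1 hk.2 hsu htu h D E hD hmax
  · exact aux_max ℓ a b ha n2 v hv s t k hk.1 hk.2 hsv htv h D E hD hmax
end
end

section
/- The division into blocks 0 = s_0 < s_1 < … < s_n < s_{n+1} = ℓ, where {s_1,…,s_n} = {m ∈ {1,…,ℓ−1} : (Σ_{i=1}^m b_i)/(Σ_{i=1}^m a_i) ≥ (Σ_{i=m+1}^ℓ b_i)/(Σ_{i=m+1}^ℓ a_i)}, is admissible. -/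
open Finset

noncomputable section

/-- The division into blocks `0 = s_0 < s_1 < … < s_n < s_{n+1} = ℓ`, where
`{s_1,…,s_n}` is the set of `m ∈ {1,…,ℓ−1}` with
`(Σ_{i≤m} b_i)/(Σ_{i≤m} a_i) ≥ (Σ_{i>m} b_i)/(Σ_{i>m} a_i)`, is admissible. -/
theorem s_division_admissible (ℓ : ℕ) (hℓ : 1 ≤ ℓ) (a b : ℕ → ℝ)
    (ha : ∀ i ∈ Finset.Icc 1 ℓ, 0 < a i) (hb : ∀ i ∈ Finset.Icc 1 ℓ, 0 < b i)
    (n : ℕ) (s : ℕ → ℕ)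
    (hs0 : s 0 = 0) (hsl : s (n + 1) = ℓ) (hsmono : ∀ i ≤ n, s i < s (i + 1))
    (hsset : ∀ m : ℕ, (∃ i : ℕ, 1 ≤ i ∧ i ≤ n ∧ s i = m) ↔
      (1 ≤ m ∧ m < ℓ ∧ ratioBA a b (m + 1) ℓ ≤ ratioBA a b 1 m)) :
    AdmissibleDiv ℓ a b n s := by
  have hsum : ∀ (f : ℕ → ℝ) (p q : ℕ), p ≤ q →
      ∑ j ∈ Finset.Icc (p + 1) q, f j
        = ∑ j ∈ Finset.Icc 1 q, f j - ∑ j ∈ Finset.Icc 1 p, f j := by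
    intro f p q hpq
    induction q, hpq using Nat.le_induction with
    | base => simp
    | succ q hq ih =>
      rw [Finset.sum_Icc_succ_top (by omega), Finset.sum_Icc_succ_top (by omega), ih]
      ring
  have hApos : ∀ p q : ℕ, p < q → q ≤ ℓ → 0 < ∑ j ∈ Finset.Icc (p + 1) q, a j := by
    intro p q hpq hq
    apply Finset.sum_pos
    · intro i hi
      rw [Finset.mem_Icc] at hi
      exact ha i (Finset.mem_Icc.mpr ⟨by omega, by omega⟩)
    · exact ⟨q, Finset.mem_Icc.mpr ⟨by omega, le_refl _⟩⟩
  have hmono : ∀ i j : ℕ, i ≤ j → j ≤ n + 1 → s i ≤ s j := by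
    intro i j hij
    induction j, hij using Nat.le_induction with
    | base => intro _; exact le_refl _
    | succ j hj ih =>
      intro h
      have h1 := ih (by omega)
      have h2 := hsmono j (by omega)
      omega
  -- the sign criterion
  have hcrit : ∀ m : ℕ, 1 ≤ m → m < ℓ → (ratioBA a b (m + 1) ℓ ≤ ratioBA a b 1 m ↔
      (∑ j ∈ Finset.Icc 1 m, a j) * (∑ j ∈ Finset.Icc 1 ℓ, b j)
        ≤ (∑ j ∈ Finset.Icc 1 m, b j) * (∑ j ∈ Finset.Icc 1 ℓ, a j)) := by
    intro m h1 h2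
    have p1 := hApos 0 m (by omega) (by omega)
    have p2 := hApos m ℓ h2 le_rfl
    unfold ratioBA
    rw [div_le_div_iff₀ p2 p1, hsum a m ℓ h2.le, hsum b m ℓ h2.le]
    constructor <;> intro h <;> linarith
  have hend : ∀ i ≤ n + 1,
      (∑ j ∈ Finset.Icc 1 (s i), a j) * (∑ j ∈ Finset.Icc 1 ℓ, b j)
        ≤ (∑ j ∈ Finset.Icc 1 (s i), b j) * (∑ j ∈ Finset.Icc 1 ℓ, a j) := by
    intro i hi
    rcases Nat.eq_zero_or_pos i with h0 | h0
    · subst h0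
      simp [hs0]
    · rcases Nat.lt_or_ge n i with h | h
      · have : i = n + 1 := by omega
        rw [this, hsl, mul_comm]
      · obtain ⟨h1, h2, h3⟩ := (hsset (s i)).1 ⟨i, h0, h, rfl⟩
        exact (hcrit _ h1 h2).1 h3
  refine ⟨hs0, hsl, hsmono, ?_⟩
  intro i hi m hm1 hm2
  have hle : s (i + 1) ≤ ℓ := by
    have := hmono (i + 1) (n + 1) (by omega) le_rfl
    omega
  have hin : (∑ j ∈ Finset.Icc 1 m, b j) * (∑ j ∈ Finset.Icc 1 ℓ, a j)
      < (∑ j ∈ Finset.Icc 1 m, a j) * (∑ j ∈ Finset.Icc 1 ℓ, b j) := by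
    by_contra hcon
    have hcon := not_lt.1 hcon
    obtain ⟨k, hk1, hk2, hk3⟩ := (hsset m).2
      ⟨by omega, by omega, (hcrit m (by omega) (by omega)).2 hcon⟩
    rcases Nat.lt_or_ge i k with h | h
    · have := hmono (i + 1) k (by omega) (by omega)
      omega
    · have := hmono k i h (by omega)
      omega
  have e1 := hend i (by omega)
  have e2 := hend (i + 1) (by omega)
  have p1 := hApos (s i) m hm1 (by omega)
  have p2 := hApos m (s (i + 1)) hm2 hle
  have p3 := hApos 0 ℓ (by omega) le_rfl
  rw [zero_add] at p3
  unfold ratioBA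
  trans (∑ j ∈ Finset.Icc 1 ℓ, b j) / (∑ j ∈ Finset.Icc 1 ℓ, a j)
  · rw [div_lt_div_iff₀ p1 p3, hsum a _ _ hm1.le, hsum b _ _ hm1.le]
    linarith
  · rw [div_lt_div_iff₀ p3 p2, hsum a _ _ hm2.le, hsum b _ _ hm2.le]
    linarith
end
end
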